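/- arXiv:1607.08536 — 2 statements merged into one kernel-verified Lean document; each statement's English description precedes it below -/
import Mathlib

section
/- For every rising radial arc (u, a, τ) with slope α > 0, one has τ^{p+1+2(ñ−1)} ≥ (λ(p+1)/2)·a^{2(ñ−1)}/α^{p−1}. (In particular τ(α) → +∞ as α → 0⁺.) -/
open Real Set

/-- `P⁺[u](r)`: the Pucci maximal operator `𝓜⁺_{λ,Λ}` evaluated on the Hessian of the
radial function `v(x) = u(|x|)`, expressed through `u'` and `u''`. -/
noncomputable def Pp (n : ℕ) (lam Lam : ℝ) (u' u'' : ℝ → ℝ) (r : ℝ) : ℝ :=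
  Lam * max (u'' r) 0 + lam * min (u'' r) 0 +
    ((n : ℝ) - 1) * (Lam * max (u' r / r) 0 + lam * min (u' r / r) 0)

/-- `P⁻[u](r)`: the Pucci minimal operator `𝓜⁻_{λ,Λ}` evaluated on the Hessian of the
radial function `v(x) = u(|x|)`. -/
noncomputable def Pm (n : ℕ) (lam Lam : ℝ) (u' u'' : ℝ → ℝ) (r : ℝ) : ℝ :=
  lam * max (u'' r) 0 + Lam * min (u'' r) 0 +
    ((n : ℝ) - 1) * (lam * max (u' r / r) 0 + Lam * min (u' r / r) 0)

/-- `u` satisfies the Pucci differential inequalities at `r`: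
`−P⁺[u](r) ≤ |u(r)|^{p−1}u(r) ≤ −P⁻[u](r)`. -/
def PucciIneq (n : ℕ) (lam Lam p : ℝ) (u u' u'' : ℝ → ℝ) (r : ℝ) : Prop :=
  -Pp n lam Lam u' u'' r ≤ |u r| ^ (p - 1) * u r ∧
    |u r| ^ (p - 1) * u r ≤ -Pm n lam Lam u' u'' r

/-- A rising radial arc with slope `α`: `u ∈ C²([a,τ])`, `u(a) = 0`, `u'(a) = α > 0`,
`u > 0` on `(a,τ]`, `u' > 0` on `[a,τ)`, `u'(τ) = 0`, and `u` satisfies the Pucci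
differential inequalities on `(a,τ)`. -/
def RisingArc (n : ℕ) (lam Lam p : ℝ) (u u' u'' : ℝ → ℝ) (a τ α : ℝ) : Prop :=
  0 < a ∧ a < τ ∧ 0 < α ∧
  (∀ r ∈ Set.Icc a τ, HasDerivAt u (u' r) r) ∧
  (∀ r ∈ Set.Icc a τ, HasDerivAt u' (u'' r) r) ∧
  ContinuousOn u'' (Set.Icc a τ) ∧
  u a = 0 ∧ u' a = α ∧
  (∀ r ∈ Set.Ioc a τ, 0 < u r) ∧
  (∀ r ∈ Set.Ico a τ, 0 < u' r) ∧
  u' τ = 0 ∧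
  (∀ r ∈ Set.Ioo a τ, PucciIneq n lam Lam p u u' u'' r)

/-
On a rising arc the inequalities force `u'' < 0`, and then read
`u'' + (N / r) u' ≥ -u ^ p / λ` with `N = ñ - 1 = (Λ / λ) (n - 1)`.
Hence `r ^ (2N) (u'² / 2 + u ^ (p + 1) / (λ (p + 1)))` increases with `r`: the weight `r ^ (2N)`
compensates the loss of kinetic energy to the damping term. At `a` this energy is purely kinetic
and at `τ` purely potential, so `a ^ (2N) α² / 2 ≤ τ ^ (2N) u(τ) ^ (p + 1) / (λ (p + 1))`.
Concavity bounds the peak value by `u(τ) ≤ α τ`.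
-/

section WeightedEnergy

variable {N a b : ℝ} {f F u u' u'' : ℝ → ℝ}

/-- The energy, with potential `F`, of the radial equation `u'' + (N / r) u' = -F'(u)`, multiplied
by the integrating factor `r ^ (2N)` of its kinetic part; `u'` stands for the derivative of `u`. -/
noncomputable def weightedEnergy (N : ℝ) (F u u' : ℝ → ℝ) (r : ℝ) : ℝ :=
  r ^ (2 * N) * (u' r ^ 2 / 2 + F (u r))

lemma hasDerivAt_weightedEnergy {r : ℝ} (hr : r ≠ 0) (hu : HasDerivAt u (u' r) r)
    (hu' : HasDerivAt u' (u'' r) r) (hF : HasDerivAt F (f (u r)) (u r)) :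
    HasDerivAt (weightedEnergy N F u u')
      (r ^ (2 * N) * (u' r * (u'' r + N * (u' r / r) + f (u r)) + 2 * N * F (u r) / r)) r := by
  have henergy := ((hu'.pow 2).div_const 2).add (hF.comp r hu)
  refine ((hasDerivAt_rpow_const (p := 2 * N) (Or.inl hr)).mul henergy).congr_deriv ?_
  simp only [rpow_sub_one hr, Pi.add_apply, Pi.pow_apply, Function.comp_apply]
  ring

lemma monotoneOn_weightedEnergy (hN : 0 ≤ N) (ha : 0 < a) (hu'c : ContinuousOn u' (Icc a b))
    (hFc : ContinuousOn (fun r => F (u r)) (Icc a b))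
    (hu : ∀ r ∈ Ioo a b, HasDerivAt u (u' r) r)
    (hu' : ∀ r ∈ Ioo a b, HasDerivAt u' (u'' r) r)
    (hF : ∀ r ∈ Ioo a b, HasDerivAt F (f (u r)) (u r))
    (hF0 : ∀ r ∈ Ioo a b, 0 ≤ F (u r)) (hu'0 : ∀ r ∈ Ioo a b, 0 ≤ u' r)
    (hode : ∀ r ∈ Ioo a b, -f (u r) ≤ u'' r + N * (u' r / r)) :
    MonotoneOn (weightedEnergy N F u u') (Icc a b) := by
  have hweight : ContinuousOn (fun r : ℝ => r ^ (2 * N)) (Icc a b) :=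
    continuousOn_id.rpow_const fun r hr => Or.inl (ha.trans_le hr.1).ne'
  refine monotoneOn_of_hasDerivWithinAt_nonneg (convex_Icc a b)
    (hweight.mul (((hu'c.pow 2).div_const 2).add hFc)) (f' := fun r =>
      r ^ (2 * N) * (u' r * (u'' r + N * (u' r / r) + f (u r)) + 2 * N * F (u r) / r)) ?_ ?_ <;>
    rw [interior_Icc] <;> intro r hr
  · exact (hasDerivAt_weightedEnergy (ha.trans hr.1).ne' (hu r hr) (hu' r hr)
      (hF r hr)).hasDerivWithinAt
  · have hr0 : 0 < r := ha.trans hr.1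
    have hforce : 0 ≤ u'' r + N * (u' r / r) + f (u r) := by linarith [hode r hr]
    have hrise := hu'0 r hr
    have hpot := hF0 r hr
    positivity

end WeightedEnergy

lemma abs_rpow_sub_one_mul_self {x : ℝ} (hx : 0 < x) (p : ℝ) : |x| ^ (p - 1) * x = x ^ p := by
  rw [abs_of_pos hx, ← rpow_add_one hx.ne', sub_add_cancel]

lemma hasDerivAt_rpow_add_one_div {p x : ℝ} (c : ℝ) (hx : x ≠ 0) (hp : p + 1 ≠ 0) :
    HasDerivAt (fun s : ℝ => s ^ (p + 1) / (c * (p + 1))) (x ^ p / c) x := by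
  refine ((hasDerivAt_rpow_const (Or.inl hx)).div_const _).congr_deriv ?_
  rw [add_sub_cancel_right, mul_comm, mul_div_mul_right _ _ hp]

section Pucci

variable {n : ℕ} {lam Lam p r : ℝ} {u u' u'' : ℝ → ℝ}

lemma Pp_of_nonpos_of_nonneg (hu'' : u'' r ≤ 0) (hu' : 0 ≤ u' r / r) :
    Pp n lam Lam u' u'' r = lam * u'' r + ((n : ℝ) - 1) * (Lam * (u' r / r)) := by
  simp [Pp, hu'', hu']

lemma Pm_of_nonpos_of_nonneg (hu'' : u'' r ≤ 0) (hu' : 0 ≤ u' r / r) :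
    Pm n lam Lam u' u'' r = Lam * u'' r + ((n : ℝ) - 1) * (lam * (u' r / r)) := by
  simp [Pm, hu'', hu']

lemma Pm_nonneg (hn : 1 ≤ n) (hlam : 0 ≤ lam) (hu'' : 0 ≤ u'' r) (hu' : 0 ≤ u' r / r) :
    0 ≤ Pm n lam Lam u' u'' r := by
  have hn' : (0 : ℝ) ≤ (n : ℝ) - 1 := sub_nonneg.2 (by exact_mod_cast hn)
  rw [Pm, max_eq_left hu'', min_eq_right hu'', max_eq_left hu', min_eq_right hu', mul_zero,
    add_zero, add_zero]
  positivity

namespace PucciIneq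

lemma second_deriv_neg (h : PucciIneq n lam Lam p u u' u'' r) (hn : 1 ≤ n) (hlam : 0 ≤ lam)
    (hu : 0 < u r) (hu' : 0 ≤ u' r / r) : u'' r < 0 := by
  by_contra! hu''
  have hpow : 0 < |u r| ^ (p - 1) * u r := by positivity
  linarith [h.2, Pm_nonneg (Lam := Lam) hn hlam hu'' hu']

lemma neg_rpow_div_le (h : PucciIneq n lam Lam p u u' u'' r) (hlam : 0 < lam)
    (hu : 0 < u r) (hu' : 0 ≤ u' r / r) (hu'' : u'' r ≤ 0) :
    -(u r ^ p / lam) ≤ u'' r + Lam / lam * ((n : ℝ) - 1) * (u' r / r) := by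
  have hlower := h.1
  rw [Pp_of_nonpos_of_nonneg hu'' hu', abs_rpow_sub_one_mul_self hu] at hlower
  calc -(u r ^ p / lam)
      ≤ (lam * u'' r + ((n : ℝ) - 1) * (Lam * (u' r / r))) / lam := by
        rw [← neg_div]
        gcongr
        linarith
    _ = u'' r + Lam / lam * ((n : ℝ) - 1) * (u' r / r) := by field_simp

lemma Lam_pos (h : PucciIneq n lam Lam p u u' u'' r) (hn : 1 ≤ n) (hlam : 0 ≤ lam)
    (hu : 0 < u r) (hu' : 0 ≤ u' r / r) : 0 < Lam := by
  have hu'' := h.second_deriv_neg hn hlam hu hu'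
  have hn' : (0 : ℝ) ≤ (n : ℝ) - 1 := sub_nonneg.2 (by exact_mod_cast hn)
  have hpow : 0 < |u r| ^ (p - 1) * u r := by positivity
  have hradial : 0 ≤ ((n : ℝ) - 1) * (lam * (u' r / r)) := by positivity
  have hupper := h.2
  rw [Pm_of_nonpos_of_nonneg hu''.le hu'] at hupper
  exact pos_of_mul_neg_left (by linarith : Lam * u'' r < 0) hu''.le

end PucciIneq

namespace RisingArc

variable {a τ α : ℝ}

lemma pucciIneq (h : RisingArc n lam Lam p u u' u'' a τ α) (hr : r ∈ Ioo a τ) :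
    PucciIneq n lam Lam p u u' u'' r := by
  obtain ⟨-, -, -, -, -, -, -, -, -, -, -, hineq⟩ := h
  exact hineq r hr

lemma pos (h : RisingArc n lam Lam p u u' u'' a τ α) (hr : r ∈ Ioc a τ) : 0 < u r := by
  obtain ⟨-, -, -, -, -, -, -, -, hpos, -, -, -⟩ := h
  exact hpos r hr

lemma deriv_nonneg (h : RisingArc n lam Lam p u u' u'' a τ α) (hr : r ∈ Ioo a τ) :
    0 ≤ u' r := by
  obtain ⟨-, -, -, -, -, -, -, -, -, hpos', -, -⟩ := h
  exact (hpos' r (Ioo_subset_Ico_self hr)).le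

lemma deriv_div_nonneg (h : RisingArc n lam Lam p u u' u'' a τ α) (hr : r ∈ Ioo a τ) :
    0 ≤ u' r / r :=
  div_nonneg (h.deriv_nonneg hr) (h.1.trans hr.1).le

lemma second_deriv_neg (h : RisingArc n lam Lam p u u' u'' a τ α) (hn : 1 ≤ n) (hlam : 0 ≤ lam)
    (hr : r ∈ Ioo a τ) : u'' r < 0 :=
  (h.pucciIneq hr).second_deriv_neg hn hlam (h.pos (Ioo_subset_Ioc_self hr))
    (h.deriv_div_nonneg hr)

lemma Lam_pos (h : RisingArc n lam Lam p u u' u'' a τ α) (hn : 1 ≤ n) (hlam : 0 ≤ lam) :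
    0 < Lam := by
  obtain ⟨r, hr⟩ := nonempty_Ioo.2 h.2.1
  exact (h.pucciIneq hr).Lam_pos hn hlam (h.pos (Ioo_subset_Ioc_self hr)) (h.deriv_div_nonneg hr)

lemma peak_le (h : RisingArc n lam Lam p u u' u'' a τ α) (hn : 1 ≤ n) (hlam : 0 ≤ lam) :
    u τ ≤ α * τ := by
  have hu''neg := fun r (hr : r ∈ Ioo a τ) => h.second_deriv_neg hn hlam hr
  obtain ⟨ha, haτ, hα, hu, hu', -, hua, hu'a, -, -, -, -⟩ := h
  have hmem : a ∈ Icc a τ := left_mem_Icc.2 haτ.le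
  have hconcave : ConcaveOn ℝ (Icc a τ) u := by
    refine concaveOn_of_hasDerivWithinAt2_nonpos (f' := u') (f'' := u'') (convex_Icc a τ)
      (fun r hr => (hu r hr).continuousAt.continuousWithinAt)
      (fun r hr => (hu r (interior_subset hr)).hasDerivWithinAt)
      (fun r hr => (hu' r (interior_subset hr)).hasDerivWithinAt) ?_
    rw [interior_Icc]
    exact fun r hr => (hu''neg r hr).le
  have hslope := hconcave.slope_le_of_hasDerivAt hmem (right_mem_Icc.2 haτ.le) haτ (hu a hmem)
  rw [slope_def_field, hua, hu'a, sub_zero, div_le_iff₀ (sub_pos.2 haτ)] at hslope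
  exact hslope.trans (mul_le_mul_of_nonneg_left (sub_le_self τ ha.le) hα.le)

lemma initial_kinetic_le_peak_potential (h : RisingArc n lam Lam p u u' u'' a τ α) (hn : 1 ≤ n)
    (hlam : 0 < lam) (hp : -1 < p) {N : ℝ} (hN : N = Lam / lam * ((n : ℝ) - 1)) :
    a ^ (2 * N) * (α ^ 2 / 2) ≤ τ ^ (2 * N) * (u τ ^ (p + 1) / (lam * (p + 1))) := by
  have hp1 : 0 < p + 1 := by linarith
  have hN0 : 0 ≤ N := hN ▸ mul_nonneg (div_pos (h.Lam_pos hn hlam.le) hlam).le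
    (sub_nonneg.2 (by exact_mod_cast hn))
  have hpos : ∀ r ∈ Ioo a τ, 0 < u r := fun _ hr => h.pos (Ioo_subset_Ioc_self hr)
  have hrise : ∀ r ∈ Ioo a τ, 0 ≤ u' r := fun _ hr => h.deriv_nonneg hr
  have hode : ∀ r ∈ Ioo a τ, -(u r ^ p / lam) ≤ u'' r + N * (u' r / r) := fun r hr =>
    hN ▸ (h.pucciIneq hr).neg_rpow_div_le hlam (hpos r hr) (h.deriv_div_nonneg hr)
      (h.second_deriv_neg hn hlam.le hr).le
  obtain ⟨ha, haτ, -, hu, hu', -, hua, rfl, -, -, hu'τ, -⟩ := h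
  have hmono : MonotoneOn
      (weightedEnergy N (fun s => s ^ (p + 1) / (lam * (p + 1))) u u') (Icc a τ) :=
    monotoneOn_weightedEnergy (f := fun s => s ^ p / lam) hN0 ha
      (fun r hr => (hu' r hr).continuousAt.continuousWithinAt)
      (fun r hr => (((hu r hr).continuousAt.rpow_const (Or.inr hp1.le)).div_const
        _).continuousWithinAt)
      (fun r hr => hu r (Ioo_subset_Icc_self hr)) (fun r hr => hu' r (Ioo_subset_Icc_self hr))
      (fun r hr => hasDerivAt_rpow_add_one_div lam (hpos r hr).ne' hp1.ne')
      (fun r hr => div_nonneg (rpow_nonneg (hpos r hr).le _) (by positivity)) hrise hode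
  simpa [weightedEnergy, hua, hu'τ, zero_rpow hp1.ne'] using
    hmono (left_mem_Icc.2 haτ.le) (right_mem_Icc.2 haτ.le) haτ.le

end RisingArc

end Pucci

theorem rising_arc_peak_location_lower_bound_general
    {n : ℕ} (hn : 1 ≤ n) {lam Lam p ntil : ℝ} (hlam : 0 < lam) (hp : -1 < p)
    (hnt : ntil = Lam / lam * ((n : ℝ) - 1) + 1)
    {a τ α : ℝ} {u u' u'' : ℝ → ℝ}
    (harc : RisingArc n lam Lam p u u' u'' a τ α) :
    lam * (p + 1) / 2 * a ^ (2 * (ntil - 1)) / α ^ (p - 1) ≤ τ ^ (p + 1 + 2 * (ntil - 1)) := by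
  have henergy := harc.initial_kinetic_le_peak_potential hn hlam hp (sub_eq_of_eq_add hnt)
  have hpeak := harc.peak_le hn hlam.le
  obtain ⟨ha, haτ, hα, -, -, -, -, -, hpos, -, -, -⟩ := harc
  have hτ : 0 < τ := ha.trans haτ
  have huτ : 0 < u τ := hpos τ (right_mem_Ioc.2 haτ)
  have hp1 : 0 < p + 1 := by linarith
  have hαpow : α ^ (p + 1) = α ^ (p - 1) * α ^ 2 := by
    rw [← rpow_two, ← rpow_add hα]
    ring_nf
  rw [div_le_iff₀ (by positivity), rpow_add hτ]
  refine le_of_mul_le_mul_right ?_ (pow_pos hα 2)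
  calc lam * (p + 1) / 2 * a ^ (2 * (ntil - 1)) * α ^ 2
      = lam * (p + 1) * (a ^ (2 * (ntil - 1)) * (α ^ 2 / 2)) := by ring
    _ ≤ lam * (p + 1) * (τ ^ (2 * (ntil - 1)) * ((α * τ) ^ (p + 1) / (lam * (p + 1)))) := by
        grw [henergy, hpeak]
    _ = τ ^ (p + 1) * τ ^ (2 * (ntil - 1)) * α ^ (p - 1) * α ^ 2 := by
        rw [mul_rpow hα.le hτ.le, hαpow]
        field_simp

/-- Lemma 3.1 (iv) (paper), quantitative form:
`τ^{p+1+2(ñ₋−1)} ≥ (λ(p+1)/2) a^{2(ñ₋−1)} / α^{p−1}` for any rising radial arc. -/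
theorem rising_arc_peak_location_lower_bound
    (n : ℕ) (hn : 2 ≤ n) (lam Lam p ntil : ℝ) (hlam : 0 < lam) (hlL : lam ≤ Lam) (hp : 1 < p)
    (hnt : ntil = Lam / lam * ((n : ℝ) - 1) + 1)
    (a τ α : ℝ) (u u' u'' : ℝ → ℝ)
    (harc : RisingArc n lam Lam p u u' u'' a τ α) :
    lam * (p + 1) / 2 * a ^ (2 * (ntil - 1)) / α ^ (p - 1) ≤ τ ^ (p + 1 + 2 * (ntil - 1)) :=
  rising_arc_peak_location_lower_bound_general (by omega) hlam (by linarith) hnt harc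
end

section
/- Fix a > 0 and an integer k ≥ 1. For every ε > 0 there exists A > 0 such that for every α ≥ A there exist a finite sequence a = r₀ < r₁ < … < r_k ≤ a + ε and a twice continuously differentiable function u : [a, r_k] → ℝ with u(a) = 0, u'(a) = α, satisfying −𝓕(r, u''(r), u'(r)/r) = |u(r)|^{p−1}u(r) for all r ∈ (a, r_k), u(r_j) = 0 for all j = 0,…,k, and (−1)^{j−1} u(r) > 0 for all r ∈ (r_{j−1}, r_j) and all j = 1,…,k. (For large initial slope α, the solution of the Cauchy problem oscillates and completes k nodal intervals within (a, a+ε].) -/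
open Real Set

/-- Uniform ellipticity of the radial form `𝓕(r, m, l)` of a uniformly elliptic operator. -/
def UnifElliptic (n : ℕ) (lam Lam : ℝ) (F : ℝ → ℝ → ℝ → ℝ) : Prop :=
  ∀ r : ℝ, 0 < r → ∀ m l s t : ℝ, 0 ≤ s → 0 ≤ t →
    lam * (s + ((n : ℝ) - 1) * t) ≤ F r (m + s) (l + t) - F r m l ∧
      F r (m + s) (l + t) - F r m l ≤ Lam * (s + ((n : ℝ) - 1) * t)

/-!
Solving for the second derivative turns the equation into `u'' = g(r, |u|^{p-1}u, u')`, where `g`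
is Lipschitz in `u'` and decreases in the forcing `y = |u|^{p-1}u` at a rate between `1/Λ` and
`1/λ`. For large `α` choose `δ` with `(αδ)^p = α/δ` and write `u(r) = αδ w((r - r₀)/δ)`. Then `w`
starts from `0` with unit slope, and on its positive part `w''` lies between `-w^p/λ` and `-w^p/Λ`
up to an error `O(δ)`. Hence, uniformly in large `α`, `w` first rises to a fixed height, is then
pulled down by uniform concavity, and returns to `0` in bounded time with slope at most `-c`. For
`u` this is a positive nodal interval of length `O(δ)` with exit slope at most `-cα`. The class of
such `g` is invariant under the symmetry `u ↦ -u`, so the next nodal interval starts with the still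
large slope `cα` of the opposite sign, and the argument can be repeated `k` times.
-/

open Filter Topology
open scoped NNReal

section DifferentialInequalities

variable {f f' f'' : ℝ → ℝ} {x y : ℝ}

lemma le_of_hasDerivAt_le {g g' : ℝ → ℝ} (hf : ∀ t ∈ Icc x y, HasDerivAt f (f' t) t)
    (hg : ∀ t ∈ Icc x y, HasDerivAt g (g' t) t) (hx : f x ≤ g x)
    (hle : ∀ t ∈ Icc x y, f' t ≤ g' t) : ∀ t ∈ Icc x y, f t ≤ g t := fun _ ht =>
  image_le_of_deriv_right_le_deriv_boundary
    (fun t ht => (hf t ht).continuousAt.continuousWithinAt)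
    (fun t ht => (hf t (Ico_subset_Icc_self ht)).hasDerivWithinAt) hx
    (fun t ht => (hg t ht).continuousAt.continuousWithinAt)
    (fun t ht => (hg t (Ico_subset_Icc_self ht)).hasDerivWithinAt)
    (fun t ht => hle t (Ico_subset_Icc_self ht)) ht

lemma le_add_mul_of_hasDerivAt_le {C : ℝ} (hf : ∀ t ∈ Icc x y, HasDerivAt f (f' t) t)
    (hC : ∀ t ∈ Icc x y, f' t ≤ C) : ∀ t ∈ Icc x y, f t ≤ f x + C * (t - x) :=
  le_of_hasDerivAt_le hf
    (fun t _ => by simpa using (((hasDerivAt_id t).sub_const x).const_mul C).const_add (f x))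
    (by simp) hC

lemma add_mul_le_of_le_hasDerivAt {C : ℝ} (hf : ∀ t ∈ Icc x y, HasDerivAt f (f' t) t)
    (hC : ∀ t ∈ Icc x y, C ≤ f' t) : ∀ t ∈ Icc x y, f x + C * (t - x) ≤ f t :=
  le_of_hasDerivAt_le
    (fun t _ => by simpa using (((hasDerivAt_id t).sub_const x).const_mul C).const_add (f x))
    hf (by simp) hC

lemma hasDerivAt_half_mul_sq_sub (C z t : ℝ) :
    HasDerivAt (fun s => C / 2 * (s - z) ^ 2) (C * (t - z)) t :=
  ((((hasDerivAt_id t).sub_const z).pow 2).const_mul (C / 2)).congr_deriv (by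
    simp only [id, Nat.cast_ofNat, Nat.reduceSub, pow_one, mul_one]; ring)

lemma le_taylor_of_second_deriv_le {C : ℝ} (hf : ∀ t ∈ Icc x y, HasDerivAt f (f' t) t)
    (hf' : ∀ t ∈ Icc x y, HasDerivAt f' (f'' t) t) (hC : ∀ t ∈ Icc x y, f'' t ≤ C) :
    ∀ t ∈ Icc x y, f t ≤ f x + f' x * (t - x) + C / 2 * (t - x) ^ 2 :=
  le_of_hasDerivAt_le hf
    (fun t _ => ((((hasDerivAt_id t).sub_const x).const_mul (f' x)).const_add (f x)).add
      (hasDerivAt_half_mul_sq_sub C x t))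
    (by simp) (fun t ht => by
      simpa using le_add_mul_of_hasDerivAt_le hf' hC t ht)

lemma add_deriv_right_mul_le_of_second_deriv_le {C : ℝ} (hxy : x ≤ y)
    (hf : ∀ t ∈ Icc x y, HasDerivAt f (f' t) t)
    (hf' : ∀ t ∈ Icc x y, HasDerivAt f' (f'' t) t) (hC : ∀ t ∈ Icc x y, f'' t ≤ C) :
    f x + f' y * (y - x) ≤ f y + C / 2 * (y - x) ^ 2 := by
  have hslope : ∀ t ∈ Icc x y, f' y + C * (t - y) ≤ f' t := fun t ht => by
    have := le_add_mul_of_hasDerivAt_le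
      (fun s hs => hf' s ⟨ht.1.trans hs.1, hs.2⟩) (fun s hs => hC s ⟨ht.1.trans hs.1, hs.2⟩)
      y (right_mem_Icc.2 ht.2)
    linarith
  have := le_of_hasDerivAt_le
    (f := fun t => f x + f' y * (t - x) + C / 2 * (t - y) ^ 2 - C / 2 * (x - y) ^ 2)
    (fun t _ => (((((hasDerivAt_id t).sub_const x).const_mul (f' y)).const_add (f x)).add
      (hasDerivAt_half_mul_sq_sub C y t)).sub_const _)
    hf (by simp) (by simpa using hslope) y (right_mem_Icc.2 hxy)
  simp only [sub_self, ne_eq, OfNat.ofNat_ne_zero, not_false_eq_true, zero_pow, mul_zero,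
    add_zero] at this
  linarith [sub_sq_comm x y]

lemma deriv_right_mul_le_neg_of_add_le {C T d : ℝ} (hxy : x ≤ y) (hT : y - x ≤ T) (hC0 : 0 ≤ C)
    (hd : 0 < d) (hf : ∀ t ∈ Icc x y, HasDerivAt f (f' t) t)
    (hf' : ∀ t ∈ Icc x y, HasDerivAt f' (f'' t) t) (hC : ∀ t ∈ Icc x y, f'' t ≤ C)
    (hdrop : f y + C / 2 * T ^ 2 + d ≤ f x) : f' y * T ≤ -d := by
  have hlen : 0 ≤ y - x := sub_nonneg.2 hxy
  have hsq : C / 2 * (y - x) ^ 2 ≤ C / 2 * T ^ 2 := by gcongr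
  have hchord : f' y * (y - x) ≤ -d := by
    linarith [add_deriv_right_mul_le_of_second_deriv_le hxy hf hf' hC]
  have hneg : f' y ≤ 0 := by
    by_contra! h
    linarith [mul_nonneg h.le hlen]
  exact (mul_le_mul_of_nonpos_left hT hneg).trans hchord

lemma exists_first_zero (hf : ContinuousOn f (Icc x y)) (hxy : x ≤ y) (hx : 0 < f x)
    (hy : f y ≤ 0) : ∃ z ∈ Ioc x y, f z = 0 ∧ ∀ t ∈ Ico x z, 0 < f t := by
  have hcompact : IsCompact (Icc x y ∩ f ⁻¹' {0}) :=
    isCompact_Icc.of_isClosed_subset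
      (hf.preimage_isClosed_of_isClosed isClosed_Icc isClosed_singleton) inter_subset_left
  obtain ⟨z, ⟨hz, hz0⟩, hmin⟩ :=
    hcompact.exists_isLeast (intermediate_value_Icc' hxy hf ⟨hy, hx.le⟩)
  refine ⟨z, ⟨hz.1.lt_of_ne ?_, hz.2⟩, hz0, fun t ht => ?_⟩
  · rintro rfl
    exact hx.ne' hz0
  · by_contra! hneg
    obtain ⟨s, hs, hs0⟩ := intermediate_value_Icc' ht.1
      (hf.mono (Icc_subset_Icc_right (ht.2.le.trans hz.2))) ⟨hneg, hx.le⟩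
    exact (hs.2.trans_lt ht.2).not_ge (hmin ⟨⟨hs.1, hs.2.trans (ht.2.le.trans hz.2)⟩, hs0⟩)

/-- The uniform concavity above the level `b` makes `f` drop below `b` within time `T`; the chord
down to that point is steep, so the slope is then negative enough to carry `f` to `0`. -/
lemma exists_nonpos_of_second_deriv_le {b κ τ T : ℝ} (hT : 0 < T) (hb : 0 < b) (hτ : 0 ≤ τ)
    (hτT : 25 * τ * T ^ 2 ≤ b) (hκT : f x + f' x * T ≤ κ / 2 * T ^ 2)
    (hf : ∀ t ∈ Icc x (x + 5 * T), HasDerivAt f (f' t) t)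
    (hf' : ∀ t ∈ Icc x (x + 5 * T), HasDerivAt f' (f'' t) t)
    (hle : ∀ t ∈ Icc x (x + 5 * T), f'' t ≤ τ)
    (hconc : ∀ t ∈ Icc x (x + 5 * T), b ≤ f t → f'' t ≤ -κ) (hx : 2 * b ≤ f x) :
    ∃ t ∈ Icc x (x + 5 * T), f t ≤ 0 := by
  obtain ⟨s, hs, hfs⟩ : ∃ s ∈ Icc x (x + T), f s < b := by
    by_contra! hge
    have hsub : Icc x (x + T) ⊆ Icc x (x + 5 * T) := Icc_subset_Icc_right (by linarith)
    have hend : x + T ∈ Icc x (x + T) := right_mem_Icc.2 (by linarith)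
    have := le_taylor_of_second_deriv_le (fun t ht => hf t (hsub ht)) (fun t ht => hf' t (hsub ht))
      (fun t ht => hconc t (hsub ht) (hge t ht)) _ hend
    rw [add_sub_cancel_left] at this
    linarith [hge _ hend]
  have hslope : f' s * T ≤ -(b / 2) :=
    deriv_right_mul_le_neg_of_add_le hs.1 (by linarith [hs.2]) hτ (half_pos hb)
      (fun t ht => hf t ⟨ht.1, by linarith [ht.2, hs.2]⟩)
      (fun t ht => hf' t ⟨ht.1, by linarith [ht.2, hs.2]⟩)
      (fun t ht => hle t ⟨ht.1, by linarith [ht.2, hs.2]⟩) (by linarith)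
  have hreach := le_taylor_of_second_deriv_le (y := s + 4 * T)
    (fun t ht => hf t ⟨hs.1.trans ht.1, by linarith [ht.2, hs.2]⟩)
    (fun t ht => hf' t ⟨hs.1.trans ht.1, by linarith [ht.2, hs.2]⟩)
    (fun t ht => hle t ⟨hs.1.trans ht.1, by linarith [ht.2, hs.2]⟩)
    (s + 4 * T) (right_mem_Icc.2 (by linarith))
  refine ⟨s + 4 * T, ⟨by linarith [hs.1], by linarith [hs.2]⟩, ?_⟩
  rw [add_sub_cancel_left] at hreach
  linarith

end DifferentialInequalities

lemma coe_projIcc_of_mem {a b x : ℝ} (h : a ≤ b) (hx : x ∈ Icc a b) : (projIcc a b h x : ℝ) = x :=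
  congrArg Subtype.val (projIcc_of_mem h hx)

lemma lipschitzWith_coe_projIcc {a b : ℝ} (h : a ≤ b) :
    LipschitzWith 1 fun x => (projIcc a b h x : ℝ) := by
  have := (LipschitzWith.subtype_val (Icc a b)).comp (LipschitzWith.projIcc h)
  rwa [one_mul] at this

section SecondOrderEquations

/-- `u` solves the second-order equation `u'' = f(t, u, u')` on `s`, with `v` its derivative. -/
structure IsSecondOrderSolOn (f : ℝ → ℝ → ℝ → ℝ) (u v : ℝ → ℝ) (s : Set ℝ) : Prop where
  hasDerivAt : ∀ t ∈ s, HasDerivAt u (v t) t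
  hasDerivAt_deriv : ∀ t ∈ s, HasDerivAt v (f t (u t) (v t)) t

/-- The conjugate of the right-hand side of a second-order equation by the symmetry `u ↦ -u`. -/
def oddReflection (f : ℝ → ℝ → ℝ → ℝ) : ℝ → ℝ → ℝ → ℝ := fun t x y => -f t (-x) (-y)

variable {f g : ℝ → ℝ → ℝ → ℝ} {u v u₁ v₁ u₂ v₂ : ℝ → ℝ} {s : Set ℝ} {a b c : ℝ}

lemma IsSecondOrderSolOn.neg (h : IsSecondOrderSolOn (oddReflection f) u v s) :
    IsSecondOrderSolOn f (-u) (-v) s where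
  hasDerivAt t ht := (h.hasDerivAt t ht).neg
  hasDerivAt_deriv t ht := by simpa [oddReflection] using (h.hasDerivAt_deriv t ht).neg

lemma IsSecondOrderSolOn.rescale {δ M r₀ : ℝ} (h : IsSecondOrderSolOn f u v s) (hδ : δ ≠ 0)
    (hfg : ∀ t x y, M / δ * f t x y = g (r₀ + δ * t) (M * δ * x) (M * y)) :
    IsSecondOrderSolOn g (fun r => M * δ * u ((r - r₀) / δ)) (fun r => M * v ((r - r₀) / δ))
      ((fun r => (r - r₀) / δ) ⁻¹' s) := by
  have hlin (r : ℝ) : HasDerivAt (fun r => (r - r₀) / δ) (1 / δ) r :=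
    ((hasDerivAt_id r).sub_const r₀).div_const δ
  refine ⟨fun r hr => ?_, fun r hr => ?_⟩
  · refine (((h.hasDerivAt _ hr).comp r (hlin r)).const_mul (M * δ)).congr_deriv ?_
    field_simp
  · refine (((h.hasDerivAt_deriv _ hr).comp r (hlin r)).const_mul M).congr_deriv ?_
    have := hfg ((r - r₀) / δ) (u ((r - r₀) / δ)) (v ((r - r₀) / δ))
    rw [mul_div_cancel₀ _ hδ, add_sub_cancel] at this
    rw [← this]
    ring

lemma IsSecondOrderSolOn.mono (h : IsSecondOrderSolOn f u v s) {s' : Set ℝ} (hs : s' ⊆ s) :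
    IsSecondOrderSolOn f u v s' :=
  ⟨fun t ht => h.hasDerivAt t (hs ht), fun t ht => h.hasDerivAt_deriv t (hs ht)⟩

lemma IsSecondOrderSolOn.continuousOn (h : IsSecondOrderSolOn f u v s)
    (hf : Continuous fun x : ℝ × ℝ × ℝ => f x.1 x.2.1 x.2.2) :
    ContinuousOn (fun t => f t (u t) (v t)) s := fun t ht =>
  (hf.continuousAt.comp (continuousAt_id.prodMk ((h.hasDerivAt t ht).continuousAt.prodMk
    (h.hasDerivAt_deriv t ht).continuousAt))).continuousWithinAt

lemma piecewise_Iic_of_le (h : u₁ b = u₂ b) {t : ℝ} (ht : b ≤ t) :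
    (Iic b).piecewise u₁ u₂ t = u₂ t := by
  rcases ht.eq_or_lt with rfl | ht
  · rw [piecewise_eq_of_mem _ _ _ self_mem_Iic, h]
  · exact piecewise_eq_of_notMem _ _ _ (notMem_Iic.2 ht)

lemma hasDerivAt_piecewise_Iic {d t : ℝ} (h₁ : t ≤ b → HasDerivAt u₁ d t)
    (h₂ : b ≤ t → HasDerivAt u₂ d t) (hb : u₁ b = u₂ b) :
    HasDerivAt ((Iic b).piecewise u₁ u₂) d t := by
  have hleft : EqOn ((Iic b).piecewise u₁ u₂) u₁ (Iic b) := piecewise_eqOn _ _ _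
  have hright : EqOn ((Iic b).piecewise u₁ u₂) u₂ (Ici b) := fun _ ht => piecewise_Iic_of_le hb ht
  rcases lt_trichotomy t b with ht | rfl | ht
  · exact (h₁ ht.le).congr_of_eventuallyEq (hleft.eventuallyEq_of_mem (Iic_mem_nhds ht))
  · have h := ((h₁ le_rfl).hasDerivWithinAt.congr hleft (hleft self_mem_Iic)).union
      ((h₂ le_rfl).hasDerivWithinAt.congr hright (hright self_mem_Ici))
    rwa [Iic_union_Ici, hasDerivWithinAt_univ] at h
  · exact (h₂ ht.le).congr_of_eventuallyEq (hright.eventuallyEq_of_mem (Ici_mem_nhds ht))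

lemma IsSecondOrderSolOn.piecewise_Iic (h₁ : IsSecondOrderSolOn f u₁ v₁ (Icc a b))
    (h₂ : IsSecondOrderSolOn f u₂ v₂ (Icc b c)) (hu : u₁ b = u₂ b) (hv : v₁ b = v₂ b) :
    IsSecondOrderSolOn f ((Iic b).piecewise u₁ u₂) ((Iic b).piecewise v₁ v₂) (Icc a c) where
  hasDerivAt t ht := by
    refine hasDerivAt_piecewise_Iic (fun htb => ?_) (fun hbt => ?_) hu
    · rw [piecewise_eq_of_mem _ v₁ _ (mem_Iic.2 htb)]
      exact h₁.hasDerivAt t ⟨ht.1, htb⟩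
    · rw [piecewise_Iic_of_le hv hbt]
      exact h₂.hasDerivAt t ⟨hbt, ht.2⟩
  hasDerivAt_deriv t ht := by
    refine hasDerivAt_piecewise_Iic (fun htb => ?_) (fun hbt => ?_) hv
    · rw [piecewise_eq_of_mem _ u₁ _ (mem_Iic.2 htb), piecewise_eq_of_mem _ v₁ _ (mem_Iic.2 htb)]
      exact h₁.hasDerivAt_deriv t ⟨ht.1, htb⟩
    · rw [piecewise_Iic_of_le hu hbt, piecewise_Iic_of_le hv hbt]
      exact h₂.hasDerivAt_deriv t ⟨hbt, ht.2⟩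

theorem exists_forall_mem_Icc_hasDerivAt_of_lipschitzWith_of_norm_le {E : Type*}
    [NormedAddCommGroup E] [NormedSpace ℝ E] [CompleteSpace E] {F : ℝ → E → E} {K B : ℝ≥0}
    (hcont : ∀ z, Continuous (F · z)) (hlip : ∀ t, LipschitzWith K (F t))
    (hB : ∀ t z, ‖F t z‖ ≤ B) {t₀ : ℝ} (ht₀ : t₀ ∈ Icc a b) (z₀ : E) :
    ∃ z : ℝ → E, z t₀ = z₀ ∧ ∀ t ∈ Icc a b, HasDerivAt z (F t (z t)) t := by
  have hmem : t₀ ∈ Icc (a - 1) (b + 1) := ⟨by linarith [ht₀.1], by linarith [ht₀.2]⟩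
  have hPL : IsPicardLindelof F ⟨t₀, hmem⟩ z₀
      (B * (max (b + 1 - t₀) (t₀ - (a - 1))).toNNReal) 0 B K :=
    { lipschitzOnWith := fun t _ => (hlip t).lipschitzOnWith
      continuousOn := fun z _ => (hcont z).continuousOn
      norm_le := fun t _ z _ => hB t z
      mul_max_le := by
        rw [NNReal.coe_mul, NNReal.coe_zero, sub_zero]
        gcongr
        exact le_coe_toNNReal _ }
  obtain ⟨z, hz₀, hz⟩ := hPL.exists_eq_forall_mem_Icc_hasDerivWithinAt₀
  exact ⟨z, hz₀, fun t ht => (hz t ⟨by linarith [ht.1], by linarith [ht.2]⟩).hasDerivAt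
    (Icc_mem_nhds (by linarith [ht.1]) (by linarith [ht.2]))⟩

theorem exists_isSecondOrderSolOn_of_lipschitzWith_of_abs_le {K B : ℝ≥0}
    (hcont : ∀ x y, Continuous fun t => f t x y)
    (hlip : ∀ t, LipschitzWith K (Function.uncurry (f t))) (hB : ∀ t x y, |f t x y| ≤ B)
    (hab : a ≤ b) (x₀ y₀ : ℝ) :
    ∃ u v : ℝ → ℝ, u a = x₀ ∧ v a = y₀ ∧ IsSecondOrderSolOn f u v (Icc a b) := by
  have hba : 0 ≤ b - a := sub_nonneg.2 hab
  set C : ℝ≥0 := ‖y₀‖₊ + B * (b - a).toNNReal with hC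
  have hCcoe : (C : ℝ) = |y₀| + B * (b - a) := by simp [hC, hba]
  -- Truncating the velocity makes the first-order system bounded, as Picard–Lindelöf requires.
  have hCC : -(C : ℝ) ≤ C := neg_le_self C.2
  obtain ⟨z, hza, hz⟩ := exists_forall_mem_Icc_hasDerivAt_of_lipschitzWith_of_norm_le
    (F := fun t z => ((projIcc (-C : ℝ) C hCC z.2 : ℝ), f t z.1 z.2))
    (K := max (1 * 1) K) (B := max C B)
    (fun z => continuous_const.prodMk (hcont z.1 z.2))
    (fun t => ((lipschitzWith_coe_projIcc hCC).comp LipschitzWith.prod_snd).prodMk (hlip t))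
    (fun t z => max_le_max (abs_le.2 (projIcc _ _ hCC z.2).2) (hB t z.1 z.2))
    (left_mem_Icc.2 hab) (x₀, y₀)
  have hv (t : ℝ) (ht : t ∈ Icc a b) : HasDerivAt (fun t => (z t).2) (f t (z t).1 (z t).2) t :=
    (hz t ht).snd
  refine ⟨fun t => (z t).1, fun t => (z t).2, by simp [hza], by simp [hza], fun t ht => ?_, hv⟩
  have hgrowth := norm_image_sub_le_of_norm_deriv_le_segment'
    (fun t ht => (hv t ht).hasDerivWithinAt) (fun t _ => hB t (z t).1 (z t).2) t ht
  have hbound : |(z t).2| ≤ C := by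
    have hBt : (B : ℝ) * (t - a) ≤ B * (b - a) := by
      gcongr
      exact ht.2
    rw [hza, Real.norm_eq_abs] at hgrowth
    rw [hCcoe]
    linarith [abs_sub_abs_le_abs_sub (z t).2 y₀]
  have hu : HasDerivAt (fun t => (z t).1) (projIcc (-C : ℝ) C hCC (z t).2 : ℝ) t :=
    (hz t ht).fst
  rwa [coe_projIcc_of_mem hCC (abs_le.1 hbound)] at hu

end SecondOrderEquations

section HalfWave

/-- A function `w` with velocity `v` and acceleration `q` that starts from `0` with unit slope and
satisfies `-w ^ p / lam - τ ≤ w'' ≤ -w ^ p / Lam + τ` on `[0, S]`, where `w` is truncated to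
`[0, R]` in the power. -/
structure IsTruncatedWave (p lam Lam R : ℝ) (hR : 0 ≤ R) (τ S : ℝ) (w v q : ℝ → ℝ) : Prop where
  apply_zero : w 0 = 0
  deriv_zero : v 0 = 1
  hasDerivAt : ∀ s ∈ Icc 0 S, HasDerivAt w (v s) s
  hasDerivAt_deriv : ∀ s ∈ Icc 0 S, HasDerivAt v (q s) s
  le_accel : ∀ s ∈ Icc 0 S, -(projIcc 0 R hR (w s) : ℝ) ^ p / lam - τ ≤ q s
  accel_le : ∀ s ∈ Icc 0 S, q s ≤ -(projIcc 0 R hR (w s) : ℝ) ^ p / Lam + τ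

namespace IsTruncatedWave

variable {p lam Lam R τ S h b κ T s : ℝ} {hR : 0 ≤ R} {w v q : ℝ → ℝ}

lemma accel_le_error (hw : IsTruncatedWave p lam Lam R hR τ S w v q) (hLam : 0 < Lam)
    (hs : s ∈ Icc 0 S) : q s ≤ τ := by
  have : 0 ≤ (projIcc 0 R hR (w s) : ℝ) ^ p / Lam :=
    div_nonneg (rpow_nonneg (projIcc 0 R hR (w s)).2.1 p) hLam.le
  linarith [hw.accel_le s hs, neg_div Lam ((projIcc 0 R hR (w s) : ℝ) ^ p)]

lemma accel_le_of_le (hw : IsTruncatedWave p lam Lam R hR τ S w v q) (hp : 0 ≤ p) (hLam : 0 < Lam)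
    (hb : 0 ≤ b) (hbR : b ≤ R) (hs : s ∈ Icc 0 S) (hbw : b ≤ w s) : q s ≤ -b ^ p / Lam + τ := by
  refine (hw.accel_le s hs).trans ?_
  have : b ≤ projIcc 0 R hR (w s) := by
    rw [← coe_projIcc_of_mem hR ⟨hb, hbR⟩]
    exact monotone_projIcc hR hbw
  gcongr

lemma deriv_le_two (hw : IsTruncatedWave p lam Lam R hR τ S w v q) (hLam : 0 < Lam) (hτ : 0 ≤ τ)
    (hτS : τ * S ≤ 1) (hs : s ∈ Icc 0 S) : v s ≤ 2 := by
  have := le_add_mul_of_hasDerivAt_le hw.hasDerivAt_deriv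
    (fun _ ht => hw.accel_le_error hLam ht) s hs
  rw [hw.deriv_zero, sub_zero] at this
  linarith [mul_le_mul_of_nonneg_left hs.2 hτ]

lemma apply_le_two_mul (hw : IsTruncatedWave p lam Lam R hR τ S w v q) (hLam : 0 < Lam)
    (hτ : 0 ≤ τ) (hτS : τ * S ≤ 1) (hs : s ∈ Icc 0 S) : w s ≤ 2 * s := by
  simpa [hw.apply_zero] using le_add_mul_of_hasDerivAt_le hw.hasDerivAt
    (fun _ ht => hw.deriv_le_two hLam hτ hτS ht) s hs

lemma one_sub_mul_le_deriv (hw : IsTruncatedWave p lam Lam R hR τ S w v q) (hp : 0 ≤ p)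
    (hlam : 0 < lam) (hLam : 0 < Lam) (hτ : 0 ≤ τ) (hτS : τ * S ≤ 1) (hτ1 : τ ≤ 1)
    (hs : s ∈ Icc 0 S) : 1 - ((2 * s) ^ p / lam + 1) * s ≤ v s := by
  have haccel : ∀ t ∈ Icc 0 s, -((2 * s) ^ p / lam + 1) ≤ q t := fun t ht => by
    have htS : t ∈ Icc 0 S := ⟨ht.1, ht.2.trans hs.2⟩
    have htrunc : (projIcc 0 R hR (w t) : ℝ) ≤ 2 * s := by
      rw [coe_projIcc]
      have := hw.apply_le_two_mul hLam hτ hτS htS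
      exact max_le (by linarith [hs.1]) (min_le_of_right_le (by linarith [ht.2]))
    have hpow : (projIcc 0 R hR (w t) : ℝ) ^ p / lam ≤ (2 * s) ^ p / lam := by
      have := (projIcc 0 R hR (w t)).2.1
      gcongr
    linarith [hw.le_accel t htS, neg_div lam ((projIcc 0 R hR (w t) : ℝ) ^ p)]
  have := add_mul_le_of_le_hasDerivAt
    (fun t ht => hw.hasDerivAt_deriv t ⟨ht.1, ht.2.trans hs.2⟩) haccel s (right_mem_Icc.2 hs.1)
  rw [hw.deriv_zero] at this
  linarith

lemma half_le_apply (hw : IsTruncatedWave p lam Lam R hR τ S w v q) (hp : 0 ≤ p)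
    (hlam : 0 < lam) (hLam : 0 < Lam) (hτ : 0 ≤ τ) (hτS : τ * S ≤ 1) (hτ1 : τ ≤ 1)
    (h1 : h ≤ 1) (hhS : h ≤ S) (hh : (2 ^ p / lam + 1) * h ≤ 1 / 2) (hs : s ∈ Icc 0 h) :
    s / 2 ≤ w s := by
  have hderiv : ∀ t ∈ Icc 0 h, 1 / 2 ≤ v t := fun t ht => by
    have hlow := hw.one_sub_mul_le_deriv hp hlam hLam hτ hτS hτ1 ⟨ht.1, ht.2.trans hhS⟩
    have hdrop : ((2 * t) ^ p / lam + 1) * t ≤ (2 ^ p / lam + 1) * h := by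
      obtain ⟨h0, hth⟩ := ht
      have h2 : 2 * t ≤ 2 := by linarith
      gcongr
    linarith
  have := add_mul_le_of_le_hasDerivAt (fun t ht => hw.hasDerivAt t ⟨ht.1, ht.2.trans hhS⟩) hderiv
    s hs
  rw [hw.apply_zero] at this
  linarith

lemma exists_zero (hw : IsTruncatedWave p lam Lam R hR τ S w v q) (hp : 0 ≤ p)
    (hlam : 0 < lam) (hLam : 0 < Lam) (hτ : 0 ≤ τ) (hτS : τ * S ≤ 1) (hτ1 : τ ≤ 1)
    (h0 : 0 < h) (h1 : h ≤ 1) (hh : (2 ^ p / lam + 1) * h ≤ 1 / 2) (hb : 0 < b) (hbh : 4 * b ≤ h)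
    (hbR : b ≤ R) (hT : 0 < T) (hS : S = h + 5 * T) (hτT : 25 * τ * T ^ 2 ≤ b)
    (hκ : κ ≤ b ^ p / Lam - τ) (hκT : 2 * h + 2 * T ≤ κ / 2 * T ^ 2) :
    ∃ s₁ ∈ Ioc h S, w s₁ = 0 ∧ (∀ s ∈ Ioo 0 s₁, 0 < w s) ∧ v s₁ * (5 * T) ≤ -b := by
  have hhS : h ≤ S := by linarith
  have hsub : Icc h S ⊆ Icc 0 S := Icc_subset_Icc_left h0.le
  have hstart : ∀ s ∈ Icc 0 h, s / 2 ≤ w s := fun s hs =>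
    hw.half_le_apply hp hlam hLam hτ hτS hτ1 h1 hhS hh hs
  have hwh : 2 * b ≤ w h := by linarith [hstart h (right_mem_Icc.2 h0.le)]
  obtain ⟨y, hy, hwy⟩ : ∃ y ∈ Icc h S, w y ≤ 0 := by
    have hwT : w h + v h * T ≤ κ / 2 * T ^ 2 := by
      have := mul_le_mul_of_nonneg_right (hw.deriv_le_two hLam hτ hτS ⟨h0.le, hhS⟩) hT.le
      linarith [hw.apply_le_two_mul hLam hτ hτS ⟨h0.le, hhS⟩]
    subst hS
    exact exists_nonpos_of_second_deriv_le hT hb hτ hτT hwT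
      (fun s hs => hw.hasDerivAt s (hsub hs)) (fun s hs => hw.hasDerivAt_deriv s (hsub hs))
      (fun s hs => hw.accel_le_error hLam (hsub hs))
      (fun s hs hbw => by
        linarith [hw.accel_le_of_le hp hLam hb.le hbR (hsub hs) hbw, neg_div Lam (b ^ p)]) hwh
  obtain ⟨s₁, hs₁, hws₁, hpos⟩ := exists_first_zero
    (fun s hs => (hw.hasDerivAt s (hsub ⟨hs.1, hs.2.trans hy.2⟩)).continuousAt.continuousWithinAt)
    hy.1 (by linarith) hwy
  have hs₁S : s₁ ≤ S := hs₁.2.trans hy.2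
  refine ⟨s₁, ⟨hs₁.1, hs₁S⟩, hws₁, fun s hs => ?_, ?_⟩
  · rcases le_total s h with hsh | hhs
    · linarith [hstart s ⟨hs.1.le, hsh⟩, hs.1]
    · exact hpos s ⟨hhs, hs.2⟩
  · have hsub₁ : Icc h s₁ ⊆ Icc 0 S := (Icc_subset_Icc_right hs₁S).trans hsub
    exact deriv_right_mul_le_neg_of_add_le hs₁.1.le (by linarith) hτ hb
      (fun s hs => hw.hasDerivAt s (hsub₁ hs)) (fun s hs => hw.hasDerivAt_deriv s (hsub₁ hs))
      (fun s hs => hw.accel_le_error hLam (hsub₁ hs)) (by linarith)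

lemma mem_Icc_of_nonneg (hw : IsTruncatedWave p lam Lam R hR τ S w v q) (hp : 0 ≤ p)
    (hlam : 0 < lam) (hLam : 0 < Lam) (hτ : 0 ≤ τ) (hτS : τ * S ≤ 1) (hτ1 : τ ≤ 1)
    (hR2 : 2 ≤ R) (hSR : 2 * S ≤ R) (hVR : ((2 * S) ^ p / lam + 1) * S ≤ R) (hs : s ∈ Icc 0 S)
    (hnonneg : 0 ≤ w s) : w s ∈ Icc 0 R ∧ v s ∈ Icc (-R) R := by
  have hdrop : ((2 * s) ^ p / lam + 1) * s ≤ ((2 * S) ^ p / lam + 1) * S := by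
    obtain ⟨h0, hsS⟩ := hs
    have hS0 : 0 ≤ S := h0.trans hsS
    gcongr
  refine ⟨⟨hnonneg, ?_⟩, ?_, ?_⟩
  · linarith [hw.apply_le_two_mul hLam hτ hτS hs, hs.2]
  · linarith [hw.one_sub_mul_le_deriv hp hlam hLam hτ hτS hτ1 hs]
  · linarith [hw.deriv_le_two hLam hτ hτS hs]

end IsTruncatedWave

lemma exists_pos_le_one_mul_le_half {L : ℝ} (hL : 1 ≤ L) :
    ∃ h : ℝ, 0 < h ∧ h ≤ 1 ∧ L * h ≤ 1 / 2 := by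
  refine ⟨1 / (2 * L), by positivity, ?_, ?_⟩
  · rw [div_le_one (by positivity)]
    linarith
  · field_simp
    rfl

lemma exists_pos_add_mul_le_half_mul_sq {κ : ℝ} (hκ : 0 < κ) (A B : ℝ) :
    ∃ T : ℝ, 0 < T ∧ A + B * T ≤ κ / 2 * T ^ 2 := by
  obtain ⟨T, hT, hAB⟩ : ∃ T : ℝ, 1 ≤ T ∧ |A| + |B| ≤ κ / 2 * T := by
    refine ⟨max 1 ((|A| + |B|) / (κ / 2)), le_max_left _ _, ?_⟩
    rw [← div_le_iff₀' (half_pos hκ)]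
    exact le_max_right _ _
  have hT0 : 0 ≤ T := zero_le_one.trans hT
  refine ⟨T, zero_lt_one.trans_le hT, ?_⟩
  calc A + B * T ≤ |A| * T + |B| * T :=
        add_le_add ((le_abs_self A).trans (le_mul_of_one_le_right (abs_nonneg A) hT))
          (mul_le_mul_of_nonneg_right (le_abs_self B) hT0)
    _ = (|A| + |B|) * T := (add_mul _ _ _).symm
    _ ≤ κ / 2 * T * T := mul_le_mul_of_nonneg_right hAB hT0
    _ = κ / 2 * T ^ 2 := by ring

theorem exists_half_wave {p lam Lam : ℝ} (hp : 0 ≤ p) (hlam : 0 < lam) (hLam : 0 < Lam) :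
    ∃ S R c τ : ℝ, ∃ hR : 0 ≤ R, 0 < S ∧ 0 < c ∧ 0 < τ ∧
      ∀ w v q, IsTruncatedWave p lam Lam R hR τ S w v q →
        ∃ s₁ ∈ Ioc 0 S, w s₁ = 0 ∧ (∀ s ∈ Ioo 0 s₁, 0 < w s) ∧
          (∀ s ∈ Icc 0 s₁, w s ∈ Icc 0 R ∧ v s ∈ Icc (-R) R) ∧ v s₁ ≤ -c := by
  have hL : 1 ≤ 2 ^ p / lam + 1 := by linarith [div_nonneg (rpow_nonneg zero_le_two p) hlam.le]
  obtain ⟨h, h0, h1, hh⟩ : ∃ h : ℝ, 0 < h ∧ h ≤ 1 ∧ (2 ^ p / lam + 1) * h ≤ 1 / 2 :=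
    exists_pos_le_one_mul_le_half hL
  obtain ⟨b, hb, hbh⟩ : ∃ b : ℝ, 0 < b ∧ 4 * b ≤ h := ⟨h / 4, by linarith, by linarith⟩
  obtain ⟨κ, hκ0, hκ⟩ : ∃ κ : ℝ, 0 < κ ∧ 2 * κ ≤ b ^ p / Lam :=
    ⟨b ^ p / Lam / 2, by positivity, by linarith⟩
  obtain ⟨T, hT, hκT⟩ : ∃ T : ℝ, 0 < T ∧ 2 * h + 2 * T ≤ κ / 2 * T ^ 2 :=
    exists_pos_add_mul_le_half_mul_sq hκ0 _ _
  obtain ⟨S, hS⟩ : ∃ S, S = h + 5 * T := ⟨_, rfl⟩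
  have hS0 : 0 < S := by linarith
  obtain ⟨R, hRlarge⟩ :
      ∃ R : ℝ, max (max 2 (2 * S)) (((2 * S) ^ p / lam + 1) * S) ≤ R := ⟨_, le_rfl⟩
  obtain ⟨⟨hR2, hSR⟩, hVR⟩ : (2 ≤ R ∧ 2 * S ≤ R) ∧ ((2 * S) ^ p / lam + 1) * S ≤ R := by
    simpa only [max_le_iff] using hRlarge
  obtain ⟨τ, hτ, hτsmall⟩ :
      ∃ τ : ℝ, 0 < τ ∧ τ ≤ min (min 1 κ) (min (1 / S) (b / (25 * T ^ 2))) :=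
    ⟨_, by positivity, le_rfl⟩
  simp only [le_min_iff] at hτsmall
  obtain ⟨⟨hτ1, hτκ⟩, hτS, hτT⟩ := hτsmall
  rw [le_div_iff₀ hS0] at hτS
  rw [le_div_iff₀ (by positivity)] at hτT
  refine ⟨S, R, b / (5 * T), τ, by linarith, hS0, by positivity, hτ, fun w v q hw => ?_⟩
  obtain ⟨s₁, hs₁, hws₁, hpos, hslope⟩ := hw.exists_zero (κ := κ) hp hlam hLam hτ.le hτS hτ1 h0 h1
    hh hb hbh (by linarith) hT hS (by linarith) (by linarith) hκT
  refine ⟨s₁, ⟨h0.trans hs₁.1, hs₁.2⟩, hws₁, hpos, fun s hs => ?_, ?_⟩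
  · refine hw.mem_Icc_of_nonneg hp hlam hLam hτ.le hτS hτ1 hR2 hSR hVR ⟨hs.1, hs.2.trans hs₁.2⟩ ?_
    rcases hs.1.eq_or_lt with rfl | h0s
    · exact hw.apply_zero.ge
    · rcases hs.2.eq_or_lt with rfl | hss₁
      · exact hws₁.ge
      · exact (hpos s ⟨h0s, hss₁⟩).le
  · rwa [← neg_div, le_div_iff₀ (by positivity)]

end HalfWave

section NormalForm

/-- A right-hand side `g r y v` for `u'' = g(r, y, u')` in which the forcing `y` drives `u''` down
at a rate between `1 / Lam` and `1 / lam`, while the drift due to the velocity `v` is controlled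
by `K`. -/
structure IsNormalForm (lam Lam : ℝ) (K : ℝ≥0) (g : ℝ → ℝ → ℝ → ℝ) : Prop where
  continuous : Continuous fun x : ℝ × ℝ × ℝ => g x.1 x.2.1 x.2.2
  decrease_mem : ∀ r v : ℝ, ∀ ⦃y y' : ℝ⦄, y ≤ y' →
    g r y v - g r y' v ∈ Icc ((y' - y) / Lam) ((y' - y) / lam)
  lipschitzWith : ∀ r y : ℝ, LipschitzWith K (g r y)
  abs_apply_zero_zero_le : ∀ r : ℝ, |g r 0 0| ≤ K

/-- An operator `Φ r m v` in `m = u''` and `v = u'` for which the implicit second-order equation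
`-Φ(r, u'', u') = y` can be put in normal form. -/
structure IsImplicitForm (lam Lam : ℝ) (K : ℝ≥0) (Φ : ℝ → ℝ → ℝ → ℝ) : Prop where
  continuous : Continuous fun x : ℝ × ℝ × ℝ => Φ x.1 x.2.1 x.2.2
  increase_mem : ∀ r v : ℝ, ∀ ⦃m m' : ℝ⦄, m ≤ m' →
    Φ r m' v - Φ r m v ∈ Icc (lam * (m' - m)) (Lam * (m' - m))
  lipschitzWith : ∀ r m : ℝ, LipschitzWith K (Φ r m)
  abs_apply_zero_zero_le : ∀ r : ℝ, |Φ r 0 0| ≤ K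

lemma surjective_of_mul_sub_le {f : ℝ → ℝ} {c : ℝ} (hf : Continuous f) (hc : 0 < c)
    (h : ∀ ⦃x y⦄, x ≤ y → c * (y - x) ≤ f y - f x) : Function.Surjective f := fun z => by
  have hd : 0 ≤ |z - f 0| / c := by positivity
  have hcd : c * (|z - f 0| / c) = |z - f 0| := mul_div_cancel₀ _ hc.ne'
  refine mem_range_of_exists_le_of_exists_ge hf ⟨-(|z - f 0| / c), ?_⟩ ⟨|z - f 0| / c, ?_⟩
  · linarith [h (neg_nonpos.2 hd), neg_le_abs (z - f 0)]
  · linarith [h hd, le_abs_self (z - f 0)]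

namespace IsImplicitForm

variable {lam Lam : ℝ} {K : ℝ≥0} {Φ : ℝ → ℝ → ℝ → ℝ} {g : ℝ → ℝ → ℝ → ℝ}

lemma mul_abs_sub_le (hΦ : IsImplicitForm lam Lam K Φ) (r v m m' : ℝ) :
    lam * |m - m'| ≤ |Φ r m v - Φ r m' v| := by
  wlog h : m' ≤ m generalizing m m'
  · rw [abs_sub_comm m, abs_sub_comm (Φ r m v)]
    exact this m' m (le_of_not_ge h)
  rw [abs_of_nonneg (sub_nonneg.2 h)]
  exact (hΦ.increase_mem r v h).1.trans (le_abs_self _)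

lemma exists_forall_eq_neg (hΦ : IsImplicitForm lam Lam K Φ) (hlam : 0 < lam) :
    ∃ g : ℝ → ℝ → ℝ → ℝ, ∀ r y v, Φ r (g r y v) v = -y := by
  have hsurj (r v : ℝ) : Function.Surjective fun m => Φ r m v :=
    surjective_of_mul_sub_le (hΦ.continuous.comp (by fun_prop : Continuous fun m => (r, m, v))) hlam
      fun _ _ h => (hΦ.increase_mem r v h).1
  choose g hg using fun r y v => hsurj r v (-y)
  exact ⟨g, hg⟩

lemma continuous_of_forall_eq_neg (hΦ : IsImplicitForm lam Lam K Φ) (hlam : 0 < lam)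
    (hg : ∀ r y v, Φ r (g r y v) v = -y) :
    Continuous fun x : ℝ × ℝ × ℝ => g x.1 x.2.1 x.2.2 := by
  refine continuous_iff_continuousAt.2 fun x₀ => tendsto_iff_dist_tendsto_zero.2 ?_
  set m₀ := g x₀.1 x₀.2.1 x₀.2.2 with hm₀
  have hbound (x : ℝ × ℝ × ℝ) :
      dist (g x.1 x.2.1 x.2.2) m₀ ≤ |-x.2.1 - Φ x.1 m₀ x.2.2| / lam := by
    rw [Real.dist_eq, le_div_iff₀' hlam, ← hg x.1 x.2.1 x.2.2]
    exact hΦ.mul_abs_sub_le _ _ _ _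
  have hlim : Continuous fun x : ℝ × ℝ × ℝ => |-x.2.1 - Φ x.1 m₀ x.2.2| / lam := by
    have := hΦ.continuous.comp (by fun_prop : Continuous fun x : ℝ × ℝ × ℝ => (x.1, m₀, x.2.2))
    exact (((continuous_fst.comp continuous_snd).neg.sub this).abs).div_const lam
  refine squeeze_zero (fun _ => dist_nonneg) hbound ((hlim.tendsto x₀).trans_eq ?_)
  rw [hm₀, hg, sub_self, abs_zero, zero_div]

lemma isNormalForm_of_forall_eq_neg (hΦ : IsImplicitForm lam Lam K Φ) (hlam : 0 < lam)
    (hLam : 0 < Lam) (hg : ∀ r y v, Φ r (g r y v) v = -y) :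
    IsNormalForm lam Lam (K / lam.toNNReal) g where
  continuous := hΦ.continuous_of_forall_eq_neg hlam hg
  decrease_mem r v y y' hy := by
    have hle : g r y' v ≤ g r y v := by
      by_contra! hlt
      have := (hΦ.increase_mem r v hlt.le).1
      rw [hg, hg] at this
      linarith [mul_pos hlam (sub_pos.2 hlt)]
    have := hΦ.increase_mem r v hle
    rw [hg, hg, mem_Icc] at this
    rw [mem_Icc, div_le_iff₀' hLam, le_div_iff₀' hlam]
    constructor <;> linarith
  lipschitzWith r y := LipschitzWith.of_dist_le_mul fun v v' => by
    have hdist := (hΦ.mul_abs_sub_le r v' (g r y v) (g r y v')).trans_eq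
      (by rw [hg, ← hg r y v, abs_sub_comm])
    rw [NNReal.coe_div, coe_toNNReal _ hlam.le, div_mul_eq_mul_div, le_div_iff₀' hlam]
    exact hdist.trans ((hΦ.lipschitzWith r (g r y v)).dist_le_mul v v')
  abs_apply_zero_zero_le r := by
    have := hΦ.mul_abs_sub_le r 0 (g r 0 0) 0
    rw [hg, sub_zero, neg_zero, zero_sub, abs_neg] at this
    rw [NNReal.coe_div, coe_toNNReal _ hlam.le, le_div_iff₀' hlam]
    exact this.trans (hΦ.abs_apply_zero_zero_le r)

end IsImplicitForm

namespace UnifElliptic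

variable {n : ℕ} {lam Lam a b : ℝ} {F : ℝ → ℝ → ℝ → ℝ}

lemma increase_mem (hF : UnifElliptic n lam Lam F) {r : ℝ} (hr : 0 < r) (l : ℝ) {m m' : ℝ}
    (hm : m ≤ m') : F r m' l - F r m l ∈ Icc (lam * (m' - m)) (Lam * (m' - m)) := by
  simpa using hF r hr m l (m' - m) 0 (sub_nonneg.2 hm) le_rfl

lemma lam_le_Lam (hF : UnifElliptic n lam Lam F) : lam ≤ Lam := by
  have := hF.increase_mem one_pos 0 zero_le_one
  simp only [sub_zero, mul_one] at this
  exact this.1.trans this.2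

lemma abs_sub_le (hF : UnifElliptic n lam Lam F) (hlam : 0 < lam) {r : ℝ} (hr : 0 < r)
    (m l l' : ℝ) : |F r m l - F r m l'| ≤ Lam * |(n : ℝ) - 1| * |l - l'| := by
  wlog h : l' ≤ l generalizing l l'
  · rw [abs_sub_comm, abs_sub_comm l]
    exact this l' l (le_of_not_ge h)
  have hLam : 0 < Lam := hlam.trans_le hF.lam_le_Lam
  have hincr : lam * (((n : ℝ) - 1) * (l - l')) ≤ F r m l - F r m l' ∧
      F r m l - F r m l' ≤ Lam * (((n : ℝ) - 1) * (l - l')) := by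
    simpa using hF r hr m l' 0 (l - l') le_rfl (sub_nonneg.2 h)
  rw [mul_assoc, ← abs_mul, abs_le]
  constructor
  · have hneg := mul_le_mul_of_nonneg_left (neg_abs_le (((n : ℝ) - 1) * (l - l'))) hlam.le
    have := mul_le_mul_of_nonneg_right hF.lam_le_Lam (abs_nonneg (((n : ℝ) - 1) * (l - l')))
    linarith
  · exact hincr.2.trans (mul_le_mul_of_nonneg_left (le_abs_self _) hLam.le)

lemma exists_isImplicitForm (hF : UnifElliptic n lam Lam F) (hlam : 0 < lam)
    (hcont : Continuous fun x : ℝ × ℝ × ℝ => F x.1 x.2.1 x.2.2) (ha : 0 < a) (hab : a ≤ b) :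
    ∃ K, IsImplicitForm lam Lam K
      fun r m v => F (projIcc a b hab r) m (v / (projIcc a b hab r : ℝ)) := by
  have hge (r : ℝ) : a ≤ projIcc a b hab r := (projIcc a b hab r).2.1
  have hpos (r : ℝ) : (0 : ℝ) < projIcc a b hab r := ha.trans_le (hge r)
  have hproj : Continuous fun r => (projIcc a b hab r : ℝ) :=
    (lipschitzWith_coe_projIcc hab).continuous
  have hLam : 0 < Lam := hlam.trans_le hF.lam_le_Lam
  obtain ⟨N, hN⟩ := isCompact_Icc.exists_bound_of_continuousOn (s := Icc a b)
    (hcont.comp (by fun_prop : Continuous fun r : ℝ => (r, (0 : ℝ), (0 : ℝ)))).continuousOn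
  obtain ⟨K, hK⟩ : ∃ K : ℝ≥0, max (Lam * |(n : ℝ) - 1| / a) N ≤ K := ⟨_, le_coe_toNNReal _⟩
  refine ⟨K, ⟨?_, fun r v m m' hm => hF.increase_mem (hpos r) _ hm, fun r m => ?_, fun r => ?_⟩⟩
  · have hdiv : Continuous fun x : ℝ × ℝ × ℝ => x.2.2 / (projIcc a b hab x.1 : ℝ) :=
      (continuous_snd.comp continuous_snd).div (hproj.comp continuous_fst) fun x => (hpos x.1).ne'
    exact hcont.comp ((hproj.comp continuous_fst).prodMk
      ((continuous_fst.comp continuous_snd).prodMk hdiv))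
  · refine LipschitzWith.of_dist_le_mul fun v v' => (hF.abs_sub_le hlam (hpos r) m _ _).trans ?_
    calc Lam * |(n : ℝ) - 1| * |v / projIcc a b hab r - v' / projIcc a b hab r|
        = Lam * |(n : ℝ) - 1| * (|v - v'| / projIcc a b hab r) := by
          rw [← sub_div, abs_div, abs_of_pos (hpos r)]
      _ ≤ Lam * |(n : ℝ) - 1| * (|v - v'| / a) := by
          gcongr
          exact hge r
      _ = Lam * |(n : ℝ) - 1| / a * |v - v'| := by ring
      _ ≤ K * |v - v'| := by
          gcongr
          exact (le_max_left _ _).trans hK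
  · simpa using (hN _ (projIcc a b hab r).2).trans ((le_max_right _ _).trans hK)

theorem exists_isNormalForm (hF : UnifElliptic n lam Lam F) (hlam : 0 < lam)
    (hcont : Continuous fun x : ℝ × ℝ × ℝ => F x.1 x.2.1 x.2.2) (ha : 0 < a) (hab : a ≤ b) :
    ∃ K g, IsNormalForm lam Lam K g ∧ ∀ r ∈ Icc a b, ∀ y v, F r (g r y v) (v / r) = -y := by
  obtain ⟨K, hΦ⟩ := hF.exists_isImplicitForm hlam hcont ha hab
  obtain ⟨g, hg⟩ := hΦ.exists_forall_eq_neg hlam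
  refine ⟨_, g, hΦ.isNormalForm_of_forall_eq_neg hlam (hlam.trans_le hF.lam_le_Lam) hg,
    fun r hr y v => ?_⟩
  simpa only [coe_projIcc_of_mem hab hr] using hg r y v

end UnifElliptic

namespace IsNormalForm

variable {lam Lam : ℝ} {K : ℝ≥0} {g : ℝ → ℝ → ℝ → ℝ}

lemma oddReflection (hg : IsNormalForm lam Lam K g) :
    IsNormalForm lam Lam K (oddReflection g) where
  continuous :=
    (hg.continuous.comp (by fun_prop : Continuous fun x : ℝ × ℝ × ℝ => (x.1, -x.2.1, -x.2.2))).neg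
  decrease_mem r v y y' hy := by
    simpa only [_root_.oddReflection, neg_sub_neg] using
      hg.decrease_mem r (-v) (neg_le_neg hy)
  lipschitzWith r y := by
    have := ((hg.lipschitzWith r (-y)).comp LipschitzWith.id.neg).neg
    rwa [mul_one] at this
  abs_apply_zero_zero_le r := by simpa [_root_.oddReflection] using hg.abs_apply_zero_zero_le r

lemma rescale (hg : IsNormalForm lam Lam K g) {α δ : ℝ} (hα : 1 ≤ α) (hδ : 0 < δ) (r₀ : ℝ) :
    IsNormalForm lam Lam (K * δ.toNNReal)
      fun s x y => δ / α * g (r₀ + δ * s) (α / δ * x) (α * y) where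
  continuous := (hg.continuous.comp (by fun_prop :
    Continuous fun x : ℝ × ℝ × ℝ => (r₀ + δ * x.1, α / δ * x.2.1, α * x.2.2))).const_mul _
  decrease_mem s y x x' hx := by
    have : 0 < α := one_pos.trans_le hα
    have hmul : α / δ * x ≤ α / δ * x' := by gcongr
    have := hg.decrease_mem (r₀ + δ * s) (α * y) hmul
    rw [← mul_sub, mul_div_assoc, mul_div_assoc, mem_Icc] at this
    rw [← mul_sub, ← inv_div α δ, mem_Icc, le_inv_mul_iff₀ (by positivity),
      inv_mul_le_iff₀ (by positivity)]
    exact this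
  lipschitzWith s x := LipschitzWith.of_dist_le_mul fun y y' => by
    have hα0 : 0 < α := one_pos.trans_le hα
    rw [Real.dist_eq, ← mul_sub, abs_mul, abs_of_pos (by positivity)]
    calc δ / α * |g (r₀ + δ * s) (α / δ * x) (α * y) - g (r₀ + δ * s) (α / δ * x) (α * y')|
        ≤ δ / α * (K * |α * y - α * y'|) := by
          gcongr
          exact (hg.lipschitzWith _ _).dist_le_mul _ _
      _ = (K * δ.toNNReal : ℝ≥0) * |y - y'| := by
          rw [← mul_sub, abs_mul, abs_of_pos hα0, NNReal.coe_mul, coe_toNNReal _ hδ.le]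
          field_simp
  abs_apply_zero_zero_le s := by
    have : 0 < α := one_pos.trans_le hα
    rw [mul_zero, mul_zero, abs_mul, abs_of_pos (by positivity), NNReal.coe_mul,
      coe_toNNReal _ hδ.le, mul_comm]
    exact mul_le_mul (hg.abs_apply_zero_zero_le _) (div_le_self hδ.le hα) (by positivity) K.2

lemma abs_apply_zero_le (hg : IsNormalForm lam Lam K g) (r v : ℝ) :
    |g r 0 v| ≤ K * (1 + |v|) := by
  have := (hg.lipschitzWith r 0).dist_le_mul v 0
  rw [Real.dist_eq, Real.dist_eq, sub_zero] at this
  linarith [abs_sub_abs_le_abs_sub (g r 0 v) (g r 0 0), hg.abs_apply_zero_zero_le r]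

lemma apply_mem_Icc (hg : IsNormalForm lam Lam K g) (r v : ℝ) {y : ℝ} (hy : 0 ≤ y) :
    g r y v ∈ Icc (-y / lam - K * (1 + |v|)) (-y / Lam + K * (1 + |v|)) := by
  have hdecr := hg.decrease_mem r v hy
  have hzero := abs_le.1 (hg.abs_apply_zero_le r v)
  rw [sub_zero, mem_Icc] at hdecr
  rw [mem_Icc, neg_div, neg_div]
  constructor <;> linarith

lemma lipschitzWith_forcing (hg : IsNormalForm lam Lam K g) (hlam : 0 < lam) (hLam : 0 < Lam)
    (r v : ℝ) : LipschitzWith lam⁻¹.toNNReal fun y => g r y v := by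
  refine LipschitzWith.of_dist_le_mul fun y y' => ?_
  wlog h : y ≤ y' generalizing y y'
  · rw [dist_comm, dist_comm y]
    exact this y' y (le_of_not_ge h)
  have := hg.decrease_mem r v h
  have hnonneg : 0 ≤ g r y v - g r y' v :=
    (div_nonneg (sub_nonneg.2 h) hLam.le).trans this.1
  rw [Real.dist_eq, abs_of_nonneg hnonneg, dist_comm, Real.dist_eq,
    abs_of_nonneg (sub_nonneg.2 h), coe_toNNReal _ (inv_nonneg.2 hlam.le), inv_mul_eq_div]
  exact this.2

end IsNormalForm

end NormalForm

section OddPower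

/-- The odd extension `x ↦ |x| ^ (p - 1) * x` of the `p`-th power. -/
noncomputable def oddPower (p x : ℝ) : ℝ := |x| ^ (p - 1) * x

variable {p : ℝ}

lemma oddPower_neg (x : ℝ) : oddPower p (-x) = -oddPower p x := by
  simp [oddPower]

lemma oddPower_of_nonneg (hp : p ≠ 0) {x : ℝ} (hx : 0 ≤ x) : oddPower p x = x ^ p := by
  rw [oddPower, abs_of_nonneg hx, ← rpow_add_one' hx (by simpa using hp), sub_add_cancel]

lemma oddPower_mul_of_nonneg (hp : p ≠ 0) {c : ℝ} (hc : 0 ≤ c) (x : ℝ) :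
    oddPower p (c * x) = c ^ p * oddPower p x := by
  rw [← oddPower_of_nonneg hp hc, oddPower, oddPower, oddPower, abs_mul,
    mul_rpow (abs_nonneg c) (abs_nonneg x)]
  ring

lemma continuous_oddPower (hp : 1 ≤ p) : Continuous (oddPower p) :=
  (continuous_abs.rpow_const fun _ => Or.inr (sub_nonneg.2 hp)).mul continuous_id

lemma lipschitzOnWith_rpow_const_Icc {R : ℝ} (hp : 1 ≤ p) :
    LipschitzOnWith (p * R ^ (p - 1)).toNNReal (fun x => x ^ p) (Icc 0 R) := by
  refine (convex_Icc 0 R).lipschitzOnWith_of_nnnorm_hasDerivWithin_le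
    (fun x _ => (hasDerivAt_rpow_const (Or.inr hp)).hasDerivWithinAt) fun x hx => ?_
  have hx0 : 0 ≤ p * x ^ (p - 1) := mul_nonneg (by linarith) (rpow_nonneg hx.1 _)
  rw [← norm_toNNReal, Real.norm_of_nonneg hx0]
  have := sub_nonneg.2 hp
  obtain ⟨_, hxR⟩ := hx
  gcongr

lemma lipschitzWith_projIcc_rpow_const {R : ℝ} (hR : 0 ≤ R) (hp : 1 ≤ p) :
    LipschitzWith (p * R ^ (p - 1)).toNNReal fun x => (projIcc 0 R hR x : ℝ) ^ p := by
  have := (lipschitzOnWith_rpow_const_Icc hp).to_restrict.comp (LipschitzWith.projIcc hR)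
  rwa [mul_one] at this

/-- The right-hand side of `u'' = g(r, |u| ^ (p - 1) * u, u')`. -/
noncomputable def powerForcing (p : ℝ) (g : ℝ → ℝ → ℝ → ℝ) : ℝ → ℝ → ℝ → ℝ :=
  fun r x y => g r (oddPower p x) y

lemma oddReflection_powerForcing (g : ℝ → ℝ → ℝ → ℝ) :
    oddReflection (powerForcing p g) = powerForcing p (oddReflection g) := by
  funext r x y
  simp only [oddReflection, powerForcing, oddPower_neg]

end OddPower

section NodalIntervals

/-- A solution of `u'' = f(r, u, u')` for which `(a, b)` is a positive nodal interval. -/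
structure IsPositiveArch (f : ℝ → ℝ → ℝ → ℝ) (u v : ℝ → ℝ) (a b : ℝ) : Prop where
  lt : a < b
  isSol : IsSecondOrderSolOn f u v (Icc a b)
  apply_left : u a = 0
  apply_right : u b = 0
  pos : ∀ r ∈ Ioo a b, 0 < u r

/-- A solution of `u'' = f(r, u, u')` with `k` consecutive nodal intervals of alternating sign,
the first one positive, separated by the zeros `rr 0, …, rr k`; only these values of `rr` matter. -/
structure IsOscillating (f : ℝ → ℝ → ℝ → ℝ) (k : ℕ) (u v : ℝ → ℝ) (rr : ℕ → ℝ) : Prop where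
  lt_succ : ∀ j < k, rr j < rr (j + 1)
  isSol : IsSecondOrderSolOn f u v (Icc (rr 0) (rr k))
  apply_node : ∀ j ≤ k, u (rr j) = 0
  sign : ∀ j < k, ∀ r ∈ Ioo (rr j) (rr (j + 1)), 0 < (-1) ^ j * u r

variable {f g : ℝ → ℝ → ℝ → ℝ} {u v u₁ v₁ u₂ v₂ : ℝ → ℝ} {a b : ℝ} {k : ℕ} {rr : ℕ → ℝ}

lemma IsPositiveArch.rescale {δ M r₀ : ℝ} (h : IsPositiveArch f u v a b) (hδ : 0 < δ) (hM : 0 < M)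
    (hfg : ∀ t x y, M / δ * f t x y = g (r₀ + δ * t) (M * δ * x) (M * y)) :
    IsPositiveArch g (fun r => M * δ * u ((r - r₀) / δ)) (fun r => M * v ((r - r₀) / δ))
      (r₀ + δ * a) (r₀ + δ * b) where
  lt := by linarith [mul_lt_mul_of_pos_left h.lt hδ]
  isSol := (h.isSol.rescale hδ.ne' hfg).mono fun r hr => by
    rw [mem_preimage, mem_Icc, le_div_iff₀' hδ, div_le_iff₀' hδ]
    constructor <;> linarith [hr.1, hr.2]
  apply_left := by simp [hδ.ne', h.apply_left]
  apply_right := by simp [hδ.ne', h.apply_right]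
  pos r hr := by
    refine mul_pos (mul_pos hM hδ) (h.pos _ ?_)
    rw [mem_Ioo, lt_div_iff₀' hδ, div_lt_iff₀' hδ]
    constructor <;> linarith [hr.1, hr.2]

lemma IsOscillating.node_zero_le (h : IsOscillating f k u v rr) {j : ℕ} (hj : j ≤ k) :
    rr 0 ≤ rr j := by
  induction j with
  | zero => rfl
  | succ j ih => exact (ih (by lia)).trans (h.lt_succ j hj).le

lemma IsOscillating.cons (h₁ : IsPositiveArch f u₁ v₁ a (rr 0))
    (h₂ : IsOscillating (oddReflection f) k u₂ v₂ rr) (hv : v₁ (rr 0) = -v₂ (rr 0)) :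
    IsOscillating f (k + 1) ((Iic (rr 0)).piecewise u₁ (-u₂)) ((Iic (rr 0)).piecewise v₁ (-v₂))
      (fun j => Nat.casesOn j a rr) := by
  have hu : u₁ (rr 0) = (-u₂) (rr 0) := by
    rw [h₁.apply_right, Pi.neg_apply, h₂.apply_node 0 k.zero_le, neg_zero]
  refine ⟨fun j hj => ?_, h₁.isSol.piecewise_Iic h₂.isSol.neg hu hv, fun j hj => ?_,
    fun j hj r hr => ?_⟩
  · cases j with
    | zero => exact h₁.lt
    | succ j => exact h₂.lt_succ j (by lia)
  · cases j with
    | zero => exact (piecewise_eq_of_mem _ _ _ (mem_Iic.2 h₁.lt.le)).trans h₁.apply_left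
    | succ j =>
      refine (piecewise_Iic_of_le hu (h₂.node_zero_le (by lia))).trans ?_
      rw [Pi.neg_apply, h₂.apply_node j (Nat.le_of_succ_le_succ hj), neg_zero]
  · cases j with
    | zero =>
      rw [pow_zero, one_mul, piecewise_eq_of_mem _ _ _ (mem_Iic.2 hr.2.le)]
      exact h₁.pos r hr
    | succ j =>
      rw [piecewise_Iic_of_le hu ((h₂.node_zero_le (by lia)).trans hr.1.le), pow_succ, mul_neg_one,
        Pi.neg_apply, neg_mul_neg]
      exact h₂.sign j (by lia) r hr

end NodalIntervals

section LargeSlope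

variable {p lam Lam : ℝ} {K : ℝ≥0} {g : ℝ → ℝ → ℝ → ℝ}

lemma IsNormalForm.continuous_powerForcing (hg : IsNormalForm lam Lam K g) (hp : 1 ≤ p) :
    Continuous fun x : ℝ × ℝ × ℝ => powerForcing p g x.1 x.2.1 x.2.2 :=
  hg.continuous.comp (continuous_fst.prodMk
    (((continuous_oddPower hp).comp continuous_snd.fst).prodMk continuous_snd.snd))

lemma IsNormalForm.exists_isTruncatedWave {R τ S : ℝ} (hg : IsNormalForm lam Lam K g) (hp : 1 ≤ p)
    (hlam : 0 < lam) (hLam : 0 < Lam) (hR : 0 ≤ R) (hτ : K * (1 + R) ≤ τ) (hS : 0 ≤ S) :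
    ∃ w v : ℝ → ℝ, IsTruncatedWave p lam Lam R hR τ S w v fun s =>
      g s ((projIcc 0 R hR (w s) : ℝ) ^ p) (projIcc (-R) R (neg_le_self hR) (v s)) := by
  have hpow (x : ℝ) : 0 ≤ (projIcc 0 R hR x : ℝ) ^ p := rpow_nonneg (projIcc 0 R hR x).2.1 p
  have hbounds (s x y : ℝ) :
      g s ((projIcc 0 R hR x : ℝ) ^ p) (projIcc (-R) R (neg_le_self hR) y) ∈
        Icc (-(projIcc 0 R hR x : ℝ) ^ p / lam - τ) (-(projIcc 0 R hR x : ℝ) ^ p / Lam + τ) := by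
    have herror : K * (1 + |(projIcc (-R) R (neg_le_self hR) y : ℝ)|) ≤ τ := by
      refine le_trans ?_ hτ
      gcongr
      exact abs_le.2 (projIcc (-R) R (neg_le_self hR) y).2
    have := hg.apply_mem_Icc s (projIcc (-R) R (neg_le_self hR) y) (hpow x)
    exact ⟨by linarith [this.1], by linarith [this.2]⟩
  obtain ⟨w, v, hw0, hv0, hsol⟩ := exists_isSecondOrderSolOn_of_lipschitzWith_of_abs_le
    (f := fun s x y => g s ((projIcc 0 R hR x : ℝ) ^ p) (projIcc (-R) R (neg_le_self hR) y))
    (B := (R ^ p / lam + τ).toNNReal)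
    (fun x y => hg.continuous.comp
      (continuous_id.prodMk (continuous_const : Continuous fun _ => (_, _))))
    (fun s => LipschitzWith.uncurry
      (fun y => (hg.lipschitzWith_forcing hlam hLam s _).comp
        (lipschitzWith_projIcc_rpow_const hR hp))
      (fun x => (hg.lipschitzWith s _).comp (lipschitzWith_coe_projIcc (neg_le_self hR))))
    (fun s x y => by
      have hle : (projIcc 0 R hR x : ℝ) ^ p / lam ≤ R ^ p / lam := by
        have := (projIcc 0 R hR x).2.1
        gcongr
        exact (projIcc 0 R hR x).2.2
      have hnonneg : 0 ≤ (projIcc 0 R hR x : ℝ) ^ p / Lam := div_nonneg (hpow x) hLam.le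
      have hnonneg' : 0 ≤ (projIcc 0 R hR x : ℝ) ^ p / lam := div_nonneg (hpow x) hlam.le
      have := hbounds s x y
      rw [neg_div, neg_div] at this
      refine (abs_le.2 ⟨?_, ?_⟩).trans (le_coe_toNNReal _) <;> linarith [this.1, this.2])
    hS 0 1
  exact ⟨w, v, hw0, hv0, hsol.hasDerivAt, hsol.hasDerivAt_deriv, fun s _ => (hbounds s _ _).1,
    fun s _ => (hbounds s _ _).2⟩

theorem exists_isPositiveArch_of_isNormalForm (hp : 1 ≤ p) (hlam : 0 < lam) (hLam : 0 < Lam) :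
    ∃ S c κ : ℝ, 0 < S ∧ 0 < c ∧ 0 < κ ∧ ∀ K g, IsNormalForm lam Lam K g → K ≤ κ →
      ∃ w v s₁, s₁ ≤ S ∧ IsPositiveArch (powerForcing p g) w v 0 s₁ ∧ v 0 = 1 ∧ v s₁ ≤ -c := by
  have hp0 : 0 < p := one_pos.trans_le hp
  obtain ⟨S, R, c, τ, hR, hS, hc, hτ, hwave⟩ := exists_half_wave hp0.le hlam hLam
  refine ⟨S, c, τ / (1 + R), hS, hc, by positivity, fun K g hg hK => ?_⟩
  obtain ⟨w, v, hw⟩ := hg.exists_isTruncatedWave hp hlam hLam hR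
    ((le_div_iff₀ (by positivity)).1 hK) hS.le
  obtain ⟨s₁, hs₁, hws₁, hpos, hmem, hslope⟩ := hwave _ _ _ hw
  have hsub : Icc 0 s₁ ⊆ Icc 0 S := Icc_subset_Icc_right hs₁.2
  refine ⟨w, v, s₁, hs₁.2, ⟨hs₁.1, ⟨fun s hs => hw.hasDerivAt s (hsub hs), fun s hs => ?_⟩,
    hw.apply_zero, hws₁, hpos⟩, hw.deriv_zero, hslope⟩
  obtain ⟨hwR, hvR⟩ := hmem s hs
  have := hw.hasDerivAt_deriv s (hsub hs)
  rwa [coe_projIcc_of_mem hR hwR, coe_projIcc_of_mem (neg_le_self hR) hvR,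
    ← oddPower_of_nonneg hp0.ne' hwR.1] at this

lemma eventually_exists_mul_rpow_eq_div (hp : 1 < p) {η : ℝ} (hη : 0 < η) :
    ∀ᶠ α : ℝ in atTop, ∃ δ ∈ Ioc 0 η, (α * δ) ^ p = α / δ := by
  set θ := (p - 1) / (p + 1) with hθ
  have hθ0 : 0 < θ := div_pos (by linarith) (by linarith)
  filter_upwards [(tendsto_rpow_neg_atTop hθ0).eventually (ge_mem_nhds hη), eventually_gt_atTop 0]
    with α hα hα0
  refine ⟨α ^ (-θ), ⟨by positivity, hα⟩, ?_⟩
  have hmul : α * α ^ (-θ) = α ^ (1 - θ) := by rw [sub_eq_add_neg, rpow_add hα0, rpow_one]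
  have hdiv : α / α ^ (-θ) = α ^ (1 + θ) := by
    rw [rpow_neg hα0.le, div_inv_eq_mul, rpow_add hα0, rpow_one]
  have hexp : (1 - θ) * p = 1 + θ := by
    have : p + 1 ≠ 0 := by linarith
    rw [hθ]
    field_simp
    ring
  rw [hmul, hdiv, ← rpow_mul hα0.le, hexp]

theorem IsNormalForm.exists_isPositiveArch (hg : IsNormalForm lam Lam K g) (hp : 1 < p)
    (hlam : 0 < lam) (hLam : 0 < Lam) :
    ∃ c > 0, ∀ ε > 0, ∀ᶠ α in atTop, ∀ r₀, ∃ u v r₁, r₁ ≤ r₀ + ε ∧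
      IsPositiveArch (powerForcing p g) u v r₀ r₁ ∧ v r₀ = α ∧ v r₁ ≤ -(c * α) := by
  obtain ⟨S, c, κ, hS, hc, hκ, harch⟩ := exists_isPositiveArch_of_isNormalForm hp.le hlam hLam
  refine ⟨c, hc, fun ε hε => ?_⟩
  have hη : 0 < min (ε / S) (κ / (K + 1)) := by positivity
  filter_upwards [eventually_exists_mul_rpow_eq_div hp hη, eventually_ge_atTop 1]
    with α ⟨δ, ⟨hδ, hδη⟩, hscale⟩ hα r₀
  have hα0 : 0 < α := one_pos.trans_le hα
  obtain ⟨hδε, hδκ⟩ := le_min_iff.1 hδη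
  rw [le_div_iff₀ (by positivity)] at hδε hδκ
  obtain ⟨w, v, s₁, hs₁, hw, hv0, hvs₁⟩ := harch _ _ (hg.rescale hα hδ r₀) <| by
    rw [NNReal.coe_mul, coe_toNNReal _ hδ.le]
    linarith
  have hu := hw.rescale (g := powerForcing p g) (r₀ := r₀) hδ hα0 fun t x y => by
    rw [powerForcing, powerForcing, oddPower_mul_of_nonneg (by linarith) (by positivity), hscale]
    field_simp
  rw [mul_zero, add_zero] at hu
  refine ⟨_, _, r₀ + δ * s₁, ?_, hu, ?_, ?_⟩
  · linarith [mul_le_mul_of_nonneg_left hs₁ hδ.le]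
  · simp [hv0]
  · rw [add_sub_cancel_left, mul_div_cancel_left₀ _ hδ.ne']
    linarith [mul_le_mul_of_nonneg_left hvs₁ hα0.le]

theorem IsNormalForm.exists_isOscillating (hg : IsNormalForm lam Lam K g) (hp : 1 < p)
    (hlam : 0 < lam) (hLam : 0 < Lam) (k : ℕ) {ε : ℝ} (hε : 0 < ε) :
    ∀ᶠ α in atTop, ∀ r₀, ∃ u v rr, rr 0 = r₀ ∧ rr k ≤ r₀ + ε ∧ v r₀ = α ∧
      IsOscillating (powerForcing p g) k u v rr := by
  obtain ⟨c, hc, harch⟩ := hg.exists_isPositiveArch hp hlam hLam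
  induction k generalizing g c ε with
  | zero =>
    filter_upwards [harch ε hε] with α hα r₀
    obtain ⟨u, v, r₁, -, hu, hv, -⟩ := hα r₀
    exact ⟨u, v, fun _ => r₀, rfl, by linarith, hv, by simp,
      hu.isSol.mono (Icc_subset_Icc_right hu.lt.le), fun _ _ => hu.apply_left, by simp⟩
  | succ k ih =>
    obtain ⟨c', hc', harch'⟩ := hg.oddReflection.exists_isPositiveArch hp hlam hLam
    have htail := (tendsto_id.const_mul_atTop hc).eventually_forall_ge_atTop
      (ih hg.oddReflection (half_pos hε) c' hc' harch')
    filter_upwards [harch (ε / 2) (half_pos hε), htail] with α hα htailα r₀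
    obtain ⟨u₁, v₁, r₁, hr₁, hu₁, hv₁, hslope⟩ := hα r₀
    obtain ⟨u₂, v₂, rr, rfl, hrr, hv₂, hu₂⟩ := htailα (-v₁ r₁) (le_neg_of_le_neg hslope) r₁
    rw [← oddReflection_powerForcing] at hu₂
    refine ⟨_, _, _, rfl, ?_, ?_, .cons hu₁ hu₂ (by rw [hv₂, neg_neg])⟩
    · change rr k ≤ r₀ + ε
      linarith
    · rw [piecewise_eq_of_mem _ _ _ (mem_Iic.2 hu₁.lt.le), hv₁]

end LargeSlope

theorem oscillating_solutions_for_large_slope_general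
    (n : ℕ) (lam Lam p : ℝ) (hlam : 0 < lam) (hp : 1 < p) (F : ℝ → ℝ → ℝ → ℝ)
    (hFcont : Continuous fun x : ℝ × ℝ × ℝ => F x.1 x.2.1 x.2.2)
    (hFell : UnifElliptic n lam Lam F) (a : ℝ) (ha : 0 < a) (k : ℕ) (ε : ℝ) (hε : 0 < ε) :
    ∃ A : ℝ, 0 < A ∧ ∀ α : ℝ, A ≤ α →
      ∃ (u u' u'' : ℝ → ℝ) (rr : ℕ → ℝ),
        rr 0 = a ∧ rr k ≤ a + ε ∧ (∀ j < k, rr j < rr (j + 1)) ∧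
        (∀ r ∈ Icc a (rr k), HasDerivAt u (u' r) r) ∧
        (∀ r ∈ Icc a (rr k), HasDerivAt u' (u'' r) r) ∧
        ContinuousOn u'' (Icc a (rr k)) ∧
        u a = 0 ∧ u' a = α ∧
        (∀ r ∈ Ioo a (rr k), -F r (u'' r) (u' r / r) = |u r| ^ (p - 1) * u r) ∧
        (∀ j ≤ k, u (rr j) = 0) ∧
        (∀ j < k, ∀ x ∈ Ioo (rr j) (rr (j + 1)), 0 < (-1 : ℝ) ^ j * u x) := by
  obtain ⟨K, g, hg, hgF⟩ :=
    hFell.exists_isNormalForm hlam hFcont ha (le_add_of_nonneg_right hε.le : a ≤ a + ε)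
  have hosc : ∀ᶠ α in atTop, ∀ r₀, ∃ u v rr, rr 0 = r₀ ∧ rr k ≤ r₀ + ε ∧ v r₀ = α ∧
      IsOscillating (powerForcing p g) k u v rr :=
    hg.exists_isOscillating hp hlam (hlam.trans_le hFell.lam_le_Lam) k hε
  obtain ⟨A, hA⟩ := (hosc.and (eventually_gt_atTop 0)).exists_forall_of_atTop
  refine ⟨A, (hA A le_rfl).2, fun α hα => ?_⟩
  obtain ⟨u, v, rr, rfl, hrr, hv, hu⟩ := (hA α hα).1 a
  refine ⟨u, v, fun r => powerForcing p g r (u r) (v r), rr, rfl, hrr, hu.lt_succ,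
    hu.isSol.hasDerivAt, hu.isSol.hasDerivAt_deriv,
    hu.isSol.continuousOn (hg.continuous_powerForcing hp.le),
    hu.apply_node 0 k.zero_le, hv, fun r hr => ?_, hu.apply_node, hu.sign⟩
  simp only [powerForcing, oddPower, hgF r ⟨hr.1.le, hr.2.le.trans hrr⟩, neg_neg]

/-- Proposition 4.1 (paper), quantitative form: for large initial slope `α`, the solution
of the radial Cauchy problem oscillates, completing `k` nodal intervals within `(a, a+ε]`. -/
theorem oscillating_solutions_for_large_slope
    (n : ℕ) (hn : 2 ≤ n) (lam Lam p : ℝ) (hlam : 0 < lam) (hlL : lam ≤ Lam) (hp : 1 < p)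
    (F : ℝ → ℝ → ℝ → ℝ)
    (hFcont : Continuous fun x : ℝ × ℝ × ℝ => F x.1 x.2.1 x.2.2)
    (hF0 : ∀ r : ℝ, F r 0 0 = 0)
    (hFell : UnifElliptic n lam Lam F)
    (a : ℝ) (ha : 0 < a) (k : ℕ) (hk : 1 ≤ k) (ε : ℝ) (hε : 0 < ε) :
    ∃ A : ℝ, 0 < A ∧ ∀ α : ℝ, A ≤ α →
      ∃ (u u' u'' : ℝ → ℝ) (rr : ℕ → ℝ),
        rr 0 = a ∧ rr k ≤ a + ε ∧ (∀ j < k, rr j < rr (j + 1)) ∧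
        (∀ r ∈ Icc a (rr k), HasDerivAt u (u' r) r) ∧
        (∀ r ∈ Icc a (rr k), HasDerivAt u' (u'' r) r) ∧
        ContinuousOn u'' (Icc a (rr k)) ∧
        u a = 0 ∧ u' a = α ∧
        (∀ r ∈ Ioo a (rr k), -F r (u'' r) (u' r / r) = |u r| ^ (p - 1) * u r) ∧
        (∀ j ≤ k, u (rr j) = 0) ∧
        (∀ j < k, ∀ x ∈ Ioo (rr j) (rr (j + 1)), 0 < (-1 : ℝ) ^ j * u x) :=
  oscillating_solutions_for_large_slope_general n lam Lam p hlam hp F hFcont hFell a ha k ε hε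
end
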